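/- arXiv:2012.12623 — 2 statements merged into one kernel-verified Lean document; each statement's English description precedes it below -/
import Mathlib

section
/- Let n ≥ 1. For integers m ≥ 1 define g_m^b(j) = Z_m^{{(j,j), b_m}}/Z_m ∈ ℚ for 0 ≤ j ≤ 2m−1, g_m(i,j) = Z_m^{{(i,i),(j,j)}}/Z_m for 0 ≤ i < j ≤ 2m−1, and the signed extension ĝ_m(i,j) = g_m(i,j) if i < j, ĝ_m(i,i) = 0, and ĝ_m(i,j) = −g_m(j,i) if i > j. Then g_n^b(0) = 1, g_n^b(1) = Z_{n−1}/Z_n, and for every integer 2 ≤ j ≤ 2n−1: g_n^b(j) = (Z_{n−1}/Z_n)·(1 − g_{n−1}^b(j−2) + Σ_{r=0}^{n−1} (−1)^r · binom(n+1, r+2) · ĝ_{n−1}(r, j−2)). -/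
open Finset

/-- Membership predicate for the vertex set `V_n` of the TSSCPP graph `G_n`:
`0 ≤ x₁ ≤ 2n`, `x₁ ≤ x₂ ≤ 2n+1`, with `(2n,2n+1)` removed when `n` is odd. -/
def memV (n : ℕ) (x : ℤ × ℤ) : Prop :=
  0 ≤ x.1 ∧ x.1 ≤ 2*(n:ℤ) ∧ x.1 ≤ x.2 ∧ x.2 ≤ 2*(n:ℤ)+1 ∧
    ¬(n % 2 = 1 ∧ x.1 = 2*(n:ℤ) ∧ x.2 = 2*(n:ℤ)+1)

instance memV.decPred (n : ℕ) : DecidablePred (memV n) := fun x => by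
  unfold memV; infer_instance

/-- The vertex set `V_n` as a finite set. -/
noncomputable def Vfin (n : ℕ) : Finset (ℤ × ℤ) :=
  (Finset.Icc (0:ℤ) (2*(n:ℤ)) ×ˢ Finset.Icc (0:ℤ) (2*(n:ℤ)+1)).filter (memV n)

/-- The vertex set `V_n` as a set. -/
def Vset (n : ℕ) : Set (ℤ × ℤ) := {x | memV n x}

/-- The distinguished vertex `b_n = (2n, 2n+1-(n mod 2))`. -/
def bvertex (n : ℕ) : ℤ × ℤ := (2*(n:ℤ), 2*(n:ℤ)+1 - ((n % 2 : ℕ) : ℤ))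

/-- Edge relation (with `x` the "lower-left" endpoint) of the TSSCPP graph `G_n`:
horizontal edges `((x₁,x₂),(x₁+1,x₂))` for `0 ≤ x₁ ≤ 2n−1`, `x₁ ≤ x₂ ≤ 2n+1`, `x₁+x₂` odd;
vertical edges `((x₁,x₂),(x₁,x₂+1))` for `0 ≤ x₁ ≤ 2n` (`2n−1` when `n` odd), `x₁ ≤ x₂ ≤ 2n`;
diagonal edges `((x₁,x₁),(x₁+1,x₁+1))` for `0 ≤ x₁ ≤ 2n−1`. -/
def edgeRel (n : ℕ) (x y : ℤ × ℤ) : Prop :=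
  (y.1 = x.1 + 1 ∧ y.2 = x.2 ∧ 0 ≤ x.1 ∧ x.1 ≤ 2*(n:ℤ) - 1 ∧ x.1 ≤ x.2 ∧
      x.2 ≤ 2*(n:ℤ)+1 ∧ Odd (x.1 + x.2)) ∨
  (y.1 = x.1 ∧ y.2 = x.2 + 1 ∧ 0 ≤ x.1 ∧ x.1 ≤ 2*(n:ℤ) - ((n % 2 : ℕ) : ℤ) ∧
      x.1 ≤ x.2 ∧ x.2 ≤ 2*(n:ℤ)) ∨
  (x.1 = x.2 ∧ y.1 = x.1 + 1 ∧ y.2 = x.2 + 1 ∧ 0 ≤ x.1 ∧ x.1 ≤ 2*(n:ℤ) - 1)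

/-- The TSSCPP graph `G_n` (as a graph on all of `ℤ × ℤ`; all of its edges join
vertices of `V_n`). -/
def Gph (n : ℕ) : SimpleGraph (ℤ × ℤ) where
  Adj x y := edgeRel n x y ∨ edgeRel n y x
  symm := ⟨fun x y h => Or.symm h⟩
  loopless := by
    constructor
    rintro ⟨x1, x2⟩ (h | h) <;>
      rcases h with ⟨h1, h2, -⟩ | ⟨h1, h2, -⟩ | ⟨h0, h1, h2, -⟩ <;> omega

/-- `Zpm n U` = number of perfect matchings of the subgraph of `G_n` induced on `V_n \ U`. -/
noncomputable def Zpm (n : ℕ) (U : Set (ℤ × ℤ)) : ℕ :=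
  Nat.card {M : ((Gph n).induce (Vset n \ U)).Subgraph // M.IsPerfectMatching}

/-- `g_m^b(j) = Z_m^{{(j,j), b_m}} / Z_m`. -/
noncomputable def gb (m j : ℕ) : ℚ :=
  (Zpm m {((j:ℤ), (j:ℤ)), bvertex m} : ℚ) / (Zpm m ∅ : ℚ)

/-- `g_m(i,j) = Z_m^{{(i,i),(j,j)}} / Z_m`. -/
noncomputable def gfn (m i j : ℕ) : ℚ :=
  (Zpm m {((i:ℤ), (i:ℤ)), ((j:ℤ), (j:ℤ))} : ℚ) / (Zpm m ∅ : ℚ)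

/-- The signed extension `ĝ_m(i,j)`: `g_m(i,j)` for `i < j`, `0` on the diagonal, and
`−g_m(j,i)` for `i > j`. -/
noncomputable def ghat (m i j : ℕ) : ℚ :=
  if i < j then gfn m i j else if j < i then -gfn m j i else 0

/-- `f` pairs up the vertices of `S` along edges of `G` and fixes every other vertex. -/
def IsPairing {α : Type*} (G : SimpleGraph α) (S : Set α) (f : α → α) : Prop :=
  (∀ x ∈ S, f x ∈ S ∧ G.Adj x (f x) ∧ f (f x) = x) ∧ ∀ x ∉ S, f x = x

/-- The number of perfect matchings of `G` on the vertex set `S`, counted as pairings. -/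
noncomputable def pairingCount {α : Type*} (G : SimpleGraph α) (S : Set α) : ℕ :=
  Nat.card {f : α → α // IsPairing G S f}

section Pairing

variable {α : Type*} {G : SimpleGraph α} {S : Set α}

theorem card_perfectMatching_induce (G : SimpleGraph α) (S : Set α) :
    Nat.card {M : (G.induce S).Subgraph // M.IsPerfectMatching} = pairingCount G S := by
  classical
  refine Nat.card_congr (Equiv.ofBijective (fun M => ⟨fun x => if h : x ∈ S then
    ((SimpleGraph.Subgraph.isPerfectMatching_iff.mp M.2 ⟨x, h⟩).choose : α) else x, ?_, ?_⟩)
    ⟨?_, ?_⟩)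
  · intro x hx
    have key := SimpleGraph.Subgraph.isPerfectMatching_iff.mp M.2
    have h1 := (key ⟨x, hx⟩).choose_spec.1
    have hm := (key ⟨x, hx⟩).choose.2
    have h2 := (key (key ⟨x, hx⟩).choose).choose_spec.2 _ h1.symm
    simp only [hx, dif_pos, hm]
    exact ⟨trivial, h1.adj_sub, by rw [← h2]⟩
  · intro x hx
    simp [hx]
  · rintro ⟨M, hM⟩ ⟨M', hM'⟩ h
    have h := congrArg Subtype.val h
    have key := SimpleGraph.Subgraph.isPerfectMatching_iff.mp hM
    have key' := SimpleGraph.Subgraph.isPerfectMatching_iff.mp hM'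
    have hc : ∀ x : S, (key x).choose = (key' x).choose := by
      intro x
      have := congrFun h x
      simp only [x.2, dif_pos] at this
      exact Subtype.ext this
    have hadj : ∀ x y, M.Adj x y ↔ M'.Adj x y := by
      intro x y
      constructor
      · intro hxy
        rw [(key x).choose_spec.2 _ hxy, hc]
        exact (key' x).choose_spec.1
      · intro hxy
        rw [(key' x).choose_spec.2 _ hxy, ← hc]
        exact (key x).choose_spec.1
    refine Subtype.ext (SimpleGraph.Subgraph.ext ?_ ?_)
    · rw [SimpleGraph.Subgraph.isSpanning_iff.mp hM.2, SimpleGraph.Subgraph.isSpanning_iff.mp hM'.2]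
    · ext x y
      exact hadj x y
  · rintro ⟨f, hf, hf'⟩
    let M : (G.induce S).Subgraph :=
      { verts := Set.univ
        Adj := fun x y => f x = y
        adj_sub := by
          rintro x y h
          have := (hf x x.2).2.1
          rw [h] at this
          exact this
        edge_vert := by simp
        symm := ⟨fun x y h => by
          rw [← h]
          exact (hf x x.2).2.2⟩ }
    have hM : M.IsPerfectMatching := by
      rw [SimpleGraph.Subgraph.isPerfectMatching_iff]
      intro x
      exact ⟨⟨f x, (hf x x.2).1⟩, rfl, fun y h => Subtype.ext (Eq.symm h)⟩
    refine ⟨⟨M, hM⟩, ?_⟩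
    ext x
    by_cases hx : x ∈ S
    · simp only [hx, dif_pos]
      exact Eq.symm (SimpleGraph.Subgraph.isPerfectMatching_iff.mp hM ⟨x, hx⟩).choose_spec.1
    · simp [hx, hf' x hx]

theorem finite_pairing (hS : S.Finite) : Finite {f : α → α // IsPairing G S f} := by
  have := hS.to_subtype
  refine Finite.of_injective (β := S → S) (fun f x => ⟨f.1 x, (f.2.1 x x.2).1⟩) ?_
  rintro ⟨f, hf⟩ ⟨g, hg⟩ h
  refine Subtype.ext (funext fun x => ?_)
  by_cases hx : x ∈ S
  · exact congrArg Subtype.val (congrFun h ⟨x, hx⟩)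
  · exact (hf.2 x hx).trans (hg.2 x hx).symm

/-- Expansion of the number of perfect matchings along the edges at a vertex. -/
theorem pairingCount_eq_sum (hS : S.Finite) {v : α} (hv : v ∈ S) (T : Finset α)
    (hT : ∀ w, w ∈ T ↔ w ∈ S ∧ G.Adj v w) :
    pairingCount G S = ∑ w ∈ T, pairingCount G (S \ {v, w}) := by
  classical
  have hfin : ∀ w : T, Finite {f : α → α // IsPairing G (S \ {v, w.1}) f} :=
    fun w => finite_pairing (hS.subset Set.sdiff_subset)
  rw [← Finset.sum_coe_sort]
  unfold pairingCount
  rw [← Nat.card_sigma]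
  refine Nat.card_congr
    { toFun := fun f => ⟨⟨f.1 v, (hT _).2 ⟨(f.2.1 v hv).1, (f.2.1 v hv).2.1⟩⟩,
        fun x => if x = v ∨ x = f.1 v then x else f.1 x, ?_, ?_⟩
      invFun := fun p => ⟨fun x => if x = v then p.1.1 else if x = p.1.1 then v else p.2.1 x,
        ?_, ?_⟩
      left_inv := ?_
      right_inv := ?_ }
  · rintro x ⟨hx, hne⟩
    obtain ⟨f, hf, hf'⟩ := f
    have hx' := hf x hx
    have hv' := hf v hv
    simp only [Set.mem_insert_iff, Set.mem_singleton_iff, not_or] at hne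
    have h1 : f x ≠ v := fun h => hne.2 (by rw [← h, hx'.2.2])
    have h2 : f x ≠ f v := fun h => hne.1 (by rw [← hx'.2.2, h, hv'.2.2])
    simp [hne.1, hne.2, h1, h2, hx']
  · intro x hx
    obtain ⟨f, hf, hf'⟩ := f
    simp only [Set.mem_sdiff, Set.mem_insert_iff, Set.mem_singleton_iff] at hx
    grind
  · intro x hx
    obtain ⟨⟨w, hw⟩, g, hg, hg'⟩ := p
    obtain ⟨hwS, hvw⟩ := (hT w).1 hw
    have hne := hvw.ne
    have hgx := hg x
    simp only [Set.mem_sdiff, Set.mem_insert_iff, Set.mem_singleton_iff] at hgx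
    have := hvw.symm
    grind
  · intro x hx
    obtain ⟨⟨w, hw⟩, g, hg, hg'⟩ := p
    obtain ⟨hwS, hvw⟩ := (hT w).1 hw
    have hgx := hg' x
    simp only [Set.mem_sdiff, Set.mem_insert_iff, Set.mem_singleton_iff] at hgx
    grind
  · rintro ⟨f, hf, hf'⟩
    refine Subtype.ext (funext fun x => ?_)
    have := (hf v hv).2.2
    grind
  · rintro ⟨⟨w, hw⟩, g, hg, hg'⟩
    refine Sigma.ext (by simp) ?_
    simp only [if_true]
    refine (Subtype.heq_iff_coe_eq ?_).2 (funext fun x => ?_)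
    · simp
    · have hgx := hg' x
      simp only [Set.mem_sdiff, Set.mem_insert_iff, Set.mem_singleton_iff] at hgx
      grind

/-- Expansion at a vertex all of whose neighbours in `S` are among two given vertices. -/
theorem pairingCount_eq_add (hS : S.Finite) {v x y : α}
    [Decidable (x ∈ S)] [Decidable (y ∈ S)] (hv : v ∈ S) (hxy : x ≠ y)
    (hx : x ∈ S → G.Adj v x) (hy : y ∈ S → G.Adj v y)
    (hN : ∀ w ∈ S, G.Adj v w → w = x ∨ w = y) :
    pairingCount G S = (if x ∈ S then pairingCount G (S \ {v, x}) else 0) +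
      if y ∈ S then pairingCount G (S \ {v, y}) else 0 := by
  classical
  rw [pairingCount_eq_sum hS hv (({x, y} : Finset α).filter (· ∈ S)) (by
    intro w
    simp only [Finset.mem_filter, Finset.mem_insert, Finset.mem_singleton]
    grind), Finset.sum_filter, Finset.sum_pair hxy]
  congr

/-- A vertex with a single neighbour in `S` is paired with it. -/
theorem pairingCount_eq_of_unique (hS : S.Finite) {v x : α} (hv : v ∈ S) (hx : x ∈ S)
    (hvx : G.Adj v x) (hN : ∀ w ∈ S, G.Adj v w → w = x) :
    pairingCount G S = pairingCount G (S \ {v, x}) := by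
  rw [pairingCount_eq_sum hS hv {x} (by
    intro w
    simp only [Finset.mem_singleton]
    grind), Finset.sum_singleton]

theorem pairingCount_eq_zero (hS : S.Finite) {v : α} (hv : v ∈ S)
    (hN : ∀ w ∈ S, ¬ G.Adj v w) : pairingCount G S = 0 := by
  rw [pairingCount_eq_sum hS hv ∅ (by
    intro w
    simp only [Finset.notMem_empty, false_iff, not_and]
    exact hN w), Finset.sum_empty]

theorem pairingCount_empty : pairingCount G (∅ : Set α) = 1 := by
  have : Unique {f : α → α // IsPairing G ∅ f} :=
    { default := ⟨id, by simp [IsPairing]⟩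
      uniq := fun f => Subtype.ext (funext fun x => f.2.2 x (by simp)) }
  exact Nat.card_unique

end Pairing

section Exterior

variable {R M : Type*} [CommRing R] [AddCommGroup M] [Module R M]

theorem ExteriorAlgebra.ι_mul_ι_comm (x y : M) :
    ExteriorAlgebra.ι R x * ExteriorAlgebra.ι R y =
      -(ExteriorAlgebra.ι R y * ExteriorAlgebra.ι R x) :=
  eq_neg_of_add_eq_zero_left (ExteriorAlgebra.ι_add_mul_swap x y)

theorem ExteriorAlgebra.commute_ι_mul_ι (x y z : M) :
    Commute (ExteriorAlgebra.ι R x * ExteriorAlgebra.ι R y) (ExteriorAlgebra.ι R z) := by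
  unfold Commute SemiconjBy
  rw [mul_assoc, ι_mul_ι_comm y z, mul_neg, ← mul_assoc, ι_mul_ι_comm x z, neg_mul, neg_neg,
    mul_assoc]

theorem ExteriorAlgebra.list_prod_mul_ι (L : List M) (y : M) :
    (L.map (ExteriorAlgebra.ι R)).prod * ExteriorAlgebra.ι R y =
      (-1) ^ L.length * (ExteriorAlgebra.ι R y * (L.map (ExteriorAlgebra.ι R)).prod) := by
  induction L with
  | nil => simp
  | cons x L ih =>
    rw [List.map_cons, List.prod_cons, List.length_cons, mul_assoc, ih, ← mul_assoc (ι R y),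
      ι_mul_ι_comm y x, pow_succ, ← mul_assoc, ← ((Commute.neg_one_left (ι R x)).pow_left _).eq]
    noncomm_ring

theorem ExteriorAlgebra.list_prod_mul_ι_of_mem {L : List M} {y : M} (h : y ∈ L) :
    (L.map (ExteriorAlgebra.ι R)).prod * ExteriorAlgebra.ι R y = 0 := by
  obtain ⟨s, t, rfl⟩ := List.append_of_mem h
  rw [List.map_append, List.prod_append, mul_assoc, list_prod_mul_ι, List.map_cons,
    List.prod_cons, ← mul_assoc (ι R y), ι_sq_zero, zero_mul, mul_zero, mul_zero]

theorem ExteriorAlgebra.ι_mul_list_prod_of_mem {L : List M} {y : M} (h : y ∈ L) :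
    ExteriorAlgebra.ι R y * (L.map (ExteriorAlgebra.ι R)).prod = 0 := by
  obtain ⟨s, t, rfl⟩ := List.append_of_mem h
  have := list_prod_mul_ι (R := R) s y
  rw [List.map_append, List.prod_append, List.map_cons,
    List.prod_cons, ← mul_assoc _ (ι R y), this]
  have h2 : ι R y * ((-1) ^ s.length * (ι R y * (s.map (ι R)).prod)) = 0 := by
    rw [← mul_assoc, ← ((Commute.neg_one_left (ι R y)).pow_left _).eq, mul_assoc, ← mul_assoc (ι R y),
      ι_sq_zero, zero_mul, mul_zero]
  rw [← mul_assoc, h2, zero_mul]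

end Exterior

/-- The vector whose `k`-th entry counts the lattice paths from column `a`, height `h` (columns
counted from the right) to the `k`-th sink. -/
def pathVec (a h : ℕ) : ℕ → ℤ := fun k =>
  if h ≤ k ∧ 2 * k ≤ a + 1 then ((a + 1 - k - h).choose (k - h) : ℤ) else 0

theorem pathVec_succ {a h : ℕ} (hh : 2 * h ≤ a + 1) :
    pathVec (a + 1) h = pathVec (a + 1) (h + 1) + pathVec a h := by
  funext k
  simp only [pathVec, Pi.add_apply]
  by_cases hk : h ≤ k
  · obtain ⟨d, rfl⟩ := Nat.exists_eq_add_of_le hk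
    rcases d with _ | d
    · rw [if_pos (by omega), if_neg (by omega), if_pos (by omega)]
      simp
    · by_cases h1 : 2 * (h + (d + 1)) ≤ a + 1
      · rw [if_pos (by omega), if_pos (by omega), if_pos (by omega)]
        obtain ⟨m, hm⟩ : ∃ m, a + 1 = m + (h + (d + 1)) + h := ⟨a + 1 - (h + (d + 1)) - h, by omega⟩
        rw [show a + 1 + 1 - (h + (d + 1)) - h = m + 1 by omega,
          show h + (d + 1) - h = d + 1 by omega,
          show a + 1 + 1 - (h + (d + 1)) - (h + 1) = m by omega,
          show h + (d + 1) - (h + 1) = d by omega,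
          show a + 1 - (h + (d + 1)) - h = m by omega, Nat.choose_succ_succ]
        push_cast
        rfl
      · by_cases h2 : 2 * (h + (d + 1)) ≤ a + 1 + 1
        · rw [if_pos (by omega), if_pos (by omega), if_neg (by omega)]
          rw [show a + 1 + 1 - (h + (d + 1)) - h = d + 1 by omega,
            show h + (d + 1) - h = d + 1 by omega,
            show a + 1 + 1 - (h + (d + 1)) - (h + 1) = d by omega,
            show h + (d + 1) - (h + 1) = d by omega]
          simp
        · rw [if_neg (by omega), if_neg (by omega), if_neg (by omega)]
          simp
  · rw [if_neg (by omega), if_neg (by omega), if_neg (by omega)]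
    simp

theorem pathVec_eq_zero {a h : ℕ} (hh : a + 1 < 2 * h) : pathVec a h = 0 := by
  funext k
  exact if_neg (by omega)

theorem pathVec_apply_eq_zero {a h k : ℕ} (hk : a + 1 < 2 * k) : pathVec a h k = 0 :=
  if_neg (by omega)

theorem pathVec_apply_self {a h : ℕ} (hh : 2 * h ≤ a + 1) : pathVec a h h = 1 := by
  simp [pathVec, hh]

theorem pathVec_apply_zero (a : ℕ) : pathVec a 0 0 = 1 := by
  simp [pathVec]

theorem sum_choose_succ_smul {M : Type*} [AddCommGroup M] (m : ℕ) (g : ℕ → M) :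
    ∑ r ∈ range (m + 2), ((-1) ^ r * ((m + 1).choose r : ℤ)) • g r =
      ∑ r ∈ range (m + 1), ((-1) ^ r * (m.choose r : ℤ)) • g r -
        ∑ r ∈ range (m + 1), ((-1) ^ r * (m.choose r : ℤ)) • g (r + 1) := by
  have h : ∑ r ∈ range (m + 1), ((-1) ^ r * (m.choose r : ℤ)) • g r =
      ∑ r ∈ range (m + 2), ((-1) ^ r * (m.choose r : ℤ)) • g r := by
    rw [sum_range_succ _ (m + 1)]
    simp
  rw [h, sum_range_succ', sum_range_succ' _ (m + 1), add_sub_right_comm, ← sum_sub_distrib]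
  congr 1
  · refine sum_congr rfl fun r _ => ?_
    rw [← sub_smul, Nat.choose_succ_succ]
    congr 1
    push_cast
    ring
  · simp

theorem pathVec_eq_sum_choose (m : ℕ) {a h : ℕ} (hm : m ≤ a) (h2 : 2 * (h + m) ≤ a + 2) :
    ∑ r ∈ range (m + 1), ((-1) ^ r * (m.choose r : ℤ)) • pathVec (a - r) h =
      pathVec a (h + m) := by
  induction m generalizing a with
  | zero => simp
  | succ m ih =>
    obtain ⟨a, rfl⟩ : ∃ b, a = b + 1 := ⟨a - 1, by omega⟩
    rw [sum_choose_succ_smul m fun r => pathVec (a + 1 - r) h, ih (by omega) (by omega)]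
    simp only [Nat.add_sub_add_right]
    rw [ih (by omega) (by omega), pathVec_succ (a := a) (h := h + m) (by omega), add_sub_cancel_right,
      add_assoc]

/-- The exterior algebra on the sinks. -/
abbrev SinkAlgebra := ExteriorAlgebra ℤ (ℕ → ℤ)

/-- Contraction with the `k`-th sink coordinate. -/
noncomputable def coord (k : ℕ) : SinkAlgebra →ₗ[ℤ] SinkAlgebra :=
  CliffordAlgebra.contractLeft (Q := 0) (LinearMap.proj k)

theorem coord_ι_mul (k : ℕ) (x : ℕ → ℤ) (b : SinkAlgebra) :
    coord k (ExteriorAlgebra.ι ℤ x * b) = x k • b - ExteriorAlgebra.ι ℤ x * coord k b :=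
  CliffordAlgebra.contractLeft_ι_mul _ _ _

theorem coord_one (k : ℕ) : coord k 1 = 0 :=
  CliffordAlgebra.contractLeft_one _ _

theorem coord_coord_self (k : ℕ) (b : SinkAlgebra) : coord k (coord k b) = 0 :=
  CliffordAlgebra.contractLeft_contractLeft _ _

theorem coord_comm (k l : ℕ) (b : SinkAlgebra) : coord k (coord l b) = -coord l (coord k b) :=
  CliffordAlgebra.contractLeft_comm _ _ _

/-- The coefficient of the product of the sinks `k, …, 0`. -/
noncomputable def topCoeff : ℕ → SinkAlgebra →ₗ[ℤ] ℤ
  | 0 => ExteriorAlgebra.algebraMapInv.toLinearMap ∘ₗ coord 0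
  | k + 1 => topCoeff k ∘ₗ coord (k + 1)

theorem topCoeff_succ (k : ℕ) (b : SinkAlgebra) :
    topCoeff (k + 1) b = topCoeff k (coord (k + 1) b) := rfl

theorem topCoeff_coord_zero (k : ℕ) (b : SinkAlgebra) : topCoeff k (coord 0 b) = 0 := by
  induction k generalizing b with
  | zero => simp [topCoeff, coord_coord_self]
  | succ k ih => rw [topCoeff_succ, coord_comm, map_neg, ih, neg_zero]

/-- The sum over all sets of disjoint pairs of consecutive diagonal points in columns `≤ a` of the
products of their path vectors. -/
noncomputable def pairProd : ℕ → SinkAlgebra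
  | 0 => 1
  | a + 1 => (1 + ExteriorAlgebra.ι ℤ (pathVec (a + 1) 0) * ExteriorAlgebra.ι ℤ (pathVec a 0)) *
      pairProd a

theorem pairProd_commute (a : ℕ) (x : ℕ → ℤ) :
    Commute (pairProd a) (ExteriorAlgebra.ι ℤ x) := by
  induction a with
  | zero => exact Commute.one_left _
  | succ a ih =>
    exact (((Commute.one_left _).add_left (ExteriorAlgebra.commute_ι_mul_ι _ _ _))).mul_left ih

theorem coord_pairProd {k a : ℕ} (h : a + 1 < 2 * k) : coord k (pairProd a) = 0 := by
  induction a with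
  | zero => exact coord_one k
  | succ a ih =>
    rw [pairProd, add_mul, one_mul, mul_assoc, map_add, coord_ι_mul, coord_ι_mul, ih (by omega),
      pathVec_apply_eq_zero (by omega), pathVec_apply_eq_zero (by omega)]
    simp

theorem coord_list_prod_mul {k : ℕ} {L : List (ℕ → ℤ)} (hL : ∀ x ∈ L, x k = 0) {b : SinkAlgebra}
    (hb : coord k b = 0) : coord k ((L.map (ExteriorAlgebra.ι ℤ)).prod * b) = 0 := by
  induction L with
  | nil => simpa using hb
  | cons x L ih =>
    rw [List.map_cons, List.prod_cons, mul_assoc, coord_ι_mul, hL x (by simp),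
      ih fun y hy => hL y (by simp [hy])]
    simp

/-- The vertices of `G_n`, without the vertex `(2n, 2n+1)`. -/
def core (n : ℕ) : Set (ℤ × ℤ) :=
  {x | 0 ≤ x.1 ∧ x.1 ≤ 2 * (n : ℤ) ∧ x.1 ≤ x.2 ∧ x.2 ≤ 2 * (n : ℤ) + 1 ∧
    ¬(x.1 = 2 * (n : ℤ) ∧ x.2 = 2 * (n : ℤ) + 1)}

/-- The part of `core n` to the right of column `c`, or in column `c` at height at least `y`. -/
def region (n : ℕ) (c y : ℤ) : Set (ℤ × ℤ) :=
  {x | x ∈ core n ∧ (c < x.1 ∨ x.1 = c ∧ y ≤ x.2)}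

theorem core_finite (n : ℕ) : (core n).Finite := by
  refine (Set.finite_Icc ((0 : ℤ), (0 : ℤ)) (2 * (n : ℤ), 2 * (n : ℤ) + 1)).subset ?_
  rintro ⟨x, y⟩ hx
  simp only [core, Set.mem_ofPred_eq] at hx
  simp only [Set.mem_Icc, Prod.mk_le_mk]
  omega

theorem region_finite (n : ℕ) (c y : ℤ) : (region n c y).Finite :=
  (core_finite n).subset fun _ hx => hx.1

theorem region_zero (n : ℕ) : region n 0 0 = core n := by
  ext ⟨x, y⟩
  simp only [region, core, Set.mem_ofPred_eq]
  omega

theorem region_next {n : ℕ} {c y : ℤ} (hy : 2 * (n : ℤ) + 2 ≤ y) :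
    region n c y = region n (c + 1) (c + 1) := by
  ext ⟨u, w⟩
  simp only [region, core, Set.mem_ofPred_eq]
  omega

theorem mem_region_iff {n : ℕ} {c y : ℤ} (hc : 0 ≤ c) (hcn : c < 2 * n) (hcy : c ≤ y)
    (hy : y ≤ 2 * n) (x : ℤ × ℤ) :
    x ∈ region n c y ↔ x = (c, y) ∨ x = (c, y + 1) ∨ x ∈ region n c (y + 2) := by
  obtain ⟨u, w⟩ := x
  simp only [region, core, Set.mem_ofPred_eq, Prod.mk.injEq]
  omega

theorem notMem_region {n : ℕ} {c y y' : ℤ} (h : y < y') : (c, y) ∉ region n c y' := by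
  simp only [region, Set.mem_ofPred_eq]
  omega

theorem adj_odd_iff {n : ℕ} {c y : ℤ} (hc : 0 ≤ c) (hcn : c < 2 * n) (hcy : c ≤ y)
    (hy : y ≤ 2 * n) (he : (c + y) % 2 = 0) {x : ℤ × ℤ} (hx : x ∈ core n) :
    (Gph n).Adj (c, y + 1) x ↔ x = (c, y) ∨ x = (c, y + 2) ∨ x = (c + 1, y + 1) := by
  obtain ⟨u, w⟩ := x
  simp only [core, Set.mem_ofPred_eq] at hx
  simp only [Gph, edgeRel, Int.odd_iff, Prod.mk.injEq]
  constructor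
  · omega
  · rintro (⟨rfl, rfl⟩ | ⟨rfl, rfl⟩ | ⟨rfl, rfl⟩)
    · exact Or.inr (Or.inr (Or.inl (by omega)))
    · exact Or.inl (Or.inr (Or.inl (by omega)))
    · exact Or.inl (Or.inl (by omega))

theorem adj_even_imp {n : ℕ} {c y : ℤ} (he : (c + y) % 2 = 0) {x : ℤ × ℤ}
    (hx : x ∈ region n c y) (h : (Gph n).Adj (c, y) x) :
    x = (c, y + 1) ∨ y = c ∧ x = (c + 1, y + 1) := by
  obtain ⟨u, w⟩ := x
  simp only [region, core, Set.mem_ofPred_eq] at hx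
  simp only [Gph, edgeRel, Int.odd_iff] at h
  simp only [Prod.mk.injEq]
  omega

theorem adj_diag {n : ℕ} {c : ℤ} (hc : 0 ≤ c) (hcn : c < 2 * n) :
    (Gph n).Adj (c, c) (c + 1, c + 1) :=
  Or.inl (Or.inr (Or.inr ⟨rfl, rfl, rfl, hc, by simp only; omega⟩))

/-- The path vector attached to a point of even coordinate sum. -/
def pointVec (n : ℕ) (p : ℤ × ℤ) : ℕ → ℤ :=
  pathVec (2 * n - p.1).toNat ((p.2 - p.1) / 2).toNat

/-- The path vector of a point as an element of the exterior algebra. -/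
noncomputable def pointElt (n : ℕ) (p : ℤ × ℤ) : SinkAlgebra :=
  ExteriorAlgebra.ι ℤ (pointVec n p)

/-- The product of the path vectors of a list of points. -/
noncomputable def wedge (n : ℕ) (L : List (ℤ × ℤ)) : SinkAlgebra :=
  (L.map (pointElt n)).prod

theorem pointElt_eq_add {n : ℕ} {c y : ℤ} (hcn : c < 2 * n) (hcy : c ≤ y)
    (hy : y ≤ 2 * n) (he : (c + y) % 2 = 0) :
    pointElt n (c, y) = pointElt n (c, y + 2) + pointElt n (c + 1, y + 1) := by
  simp only [pointElt, pointVec]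
  rw [← map_add]
  obtain ⟨a, ha⟩ : ∃ a : ℕ, 2 * (n : ℤ) - c = a + 1 := ⟨(2 * n - c - 1).toNat, by omega⟩
  obtain ⟨h, hh⟩ : ∃ h : ℕ, y - c = 2 * h := ⟨((y - c) / 2).toNat, by omega⟩
  rw [show (2 * (n : ℤ) - c).toNat = a + 1 by omega, show ((y - c) / 2).toNat = h by omega,
    show ((y + 2 - c) / 2).toNat = h + 1 by omega,
    show (2 * (n : ℤ) - (c + 1)).toNat = a by omega,
    show ((y + 1 - (c + 1)) / 2).toNat = h by omega, pathVec_succ (by omega)]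

theorem pointElt_eq_zero {n : ℕ} {c y : ℤ} (hc : c ≤ 2 * n) (hy : 2 * n + 1 < y)
    (he : (c + y) % 2 = 0) :
    pointElt n (c, y) = 0 := by
  simp only [pointElt, pointVec]
  rw [pathVec_eq_zero, map_zero]
  omega

theorem wedge_eq (n : ℕ) (L : List (ℤ × ℤ)) :
    wedge n L = ((L.map (pointVec n)).map (ExteriorAlgebra.ι ℤ)).prod := by
  rw [wedge, List.map_map]
  rfl

theorem wedge_append (n : ℕ) (L L' : List (ℤ × ℤ)) :
    wedge n (L ++ L') = wedge n L * wedge n L' := by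
  rw [wedge, List.map_append, List.prod_append, wedge, wedge]

theorem wedge_cons (n : ℕ) (p : ℤ × ℤ) (L : List (ℤ × ℤ)) :
    wedge n (p :: L) = pointElt n p * wedge n L := by
  rw [wedge, List.map_cons, List.prod_cons, wedge]

theorem wedge_mul_pointElt_of_mem {n : ℕ} {L : List (ℤ × ℤ)} {p : ℤ × ℤ} (h : p ∈ L) :
    wedge n L * pointElt n p = 0 := by
  rw [wedge_eq]
  exact ExteriorAlgebra.list_prod_mul_ι_of_mem (List.mem_map_of_mem h)

theorem pointElt_mul_wedge_of_mem {n : ℕ} {L : List (ℤ × ℤ)} {p : ℤ × ℤ} (h : p ∈ L) :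
    pointElt n p * wedge n L = 0 := by
  rw [wedge_eq]
  exact ExteriorAlgebra.ι_mul_list_prod_of_mem (List.mem_map_of_mem h)

theorem pointElt_mul_pointElt_commute (n : ℕ) (p q : ℤ × ℤ) (L : List (ℤ × ℤ)) :
    Commute (pointElt n p * pointElt n q) (wedge n L) := by
  induction L with
  | nil => exact Commute.one_right _
  | cons r L ih =>
    rw [wedge_cons]
    exact (ExteriorAlgebra.commute_ι_mul_ι _ _ _).mul_right ih

/-- The removed points that can occur once the columns to the left of `c` and the part of column
`c` below `y` are matched, listed from left to right and from top to bottom. -/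
structure Admissible (n : ℕ) (c y : ℤ) (L : List (ℤ × ℤ)) : Prop where
  mem : ∀ p ∈ L, p ∈ region n c y
  even : ∀ p ∈ L, (p.1 + p.2) % 2 = 0
  sorted : L.Pairwise fun p q => p.1 < q.1 ∨ p.1 = q.1 ∧ q.2 < p.2
  low : ∀ p ∈ L, p.1 = c + 1 → p.2 < y + 1 ∨ p.2 = p.1
  diag : ∀ p ∈ L, c + 1 < p.1 → p.2 = p.1

/-- The number of perfect matchings of the region that avoid the points of `L`. -/
noncomputable def regionCount (n : ℕ) (c y : ℤ) (L : List (ℤ × ℤ)) : ℕ :=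
  pairingCount (Gph n) (region n c y \ {x | x ∈ L})

theorem Admissible.next {n : ℕ} {c y : ℤ} {L : List (ℤ × ℤ)} (h : Admissible n c y L)
    (hy : 2 * (n : ℤ) + 2 ≤ y) : Admissible n (c + 1) (c + 1) L where
  mem p hp := region_next (c := c) hy ▸ h.mem p hp
  even := h.even
  sorted := h.sorted
  low p hp hpc := Or.inr (h.diag p hp (by omega))
  diag p hp hpc := h.diag p hp (by omega)

section Steps

variable {n : ℕ} {c y : ℤ} {L L₁ L₂ : List (ℤ × ℤ)}

/-- The parts of an admissible list above and to the right of the point `(c, y)`. -/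
structure SplitAt (n : ℕ) (c y : ℤ) (L₁ L₂ : List (ℤ × ℤ)) : Prop where
  above : ∀ p ∈ L₁, p.1 = c ∧ y + 2 ≤ p.2 ∧ p.2 ≤ 2 * n + 1 ∧ (p.1 + p.2) % 2 = 0
  right : ∀ p ∈ L₂, c < p.1 ∧ p ∈ core n ∧ (p.1 + p.2) % 2 = 0 ∧
    (p.1 = c + 1 → p.2 < y + 1 ∨ p.2 = p.1) ∧ (c + 1 < p.1 → p.2 = p.1)
  sorted_above : L₁.Pairwise fun p q => p.1 < q.1 ∨ p.1 = q.1 ∧ q.2 < p.2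
  sorted_right : L₂.Pairwise fun p q => p.1 < q.1 ∨ p.1 = q.1 ∧ q.2 < p.2

theorem Admissible.split_of_mem (h : Admissible n c y L) (hs : (c, y) ∈ L) :
    ∃ L₁ L₂, L = L₁ ++ (c, y) :: L₂ ∧ SplitAt n c y L₁ L₂ := by
  obtain ⟨L₁, L₂, rfl⟩ := List.append_of_mem hs
  obtain ⟨hm, he, hs, hl, hd⟩ := h
  rw [List.pairwise_append, List.pairwise_cons] at hs
  have hec := he (c, y) (by simp)
  refine ⟨L₁, L₂, rfl, fun p hp => ?_, fun p hp => ?_, hs.1, hs.2.1.2⟩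
  · have h1 := hm p (by simp [hp])
    have h2 := he p (by simp [hp])
    have h3 := hs.2.2 p hp (c, y) (by simp)
    simp only [region, core, Set.mem_ofPred_eq] at h1 hec h3
    omega
  · have h1 := hm p (by simp [hp])
    have h2 := hs.2.1.1 p hp
    refine ⟨?_, h1.1, he p (by simp [hp]), hl p (by simp [hp]), hd p (by simp [hp])⟩
    have h3 := h1.2
    simp only at h2
    omega

theorem Admissible.split_of_notMem (h : Admissible n c y L) (hs : (c, y) ∉ L)
    (hcy : (c + y) % 2 = 0) :
    ∃ L₁ L₂, L = L₁ ++ L₂ ∧ SplitAt n c y L₁ L₂ := by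
  obtain ⟨hm, he, hsort, hl, hd⟩ := h
  have key : ∀ L : List (ℤ × ℤ), (∀ p ∈ L, p ∈ region n c y) →
      (L.Pairwise fun p q => p.1 < q.1 ∨ p.1 = q.1 ∧ q.2 < p.2) →
      ∃ L₁ L₂, L = L₁ ++ L₂ ∧ (∀ p ∈ L₁, p.1 = c) ∧ ∀ p ∈ L₂, c < p.1 := by
    intro L hL hsort
    induction L with
    | nil => exact ⟨[], [], by simp⟩
    | cons p L ih =>
      rw [List.pairwise_cons] at hsort
      have hp := (hL p (by simp)).2
      by_cases hpc : p.1 = c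
      · obtain ⟨L₁, L₂, rfl, h1, h2⟩ := ih (fun q hq => hL q (by simp [hq])) hsort.2
        exact ⟨p :: L₁, L₂, rfl, by simpa [hpc] using h1, h2⟩
      · refine ⟨[], p :: L, rfl, by simp, fun q hq => ?_⟩
        rcases List.mem_cons.1 hq with rfl | hq
        · omega
        · have := hsort.1 q hq
          omega
  obtain ⟨L₁, L₂, rfl, h1, h2⟩ := key L hm hsort
  rw [List.pairwise_append] at hsort
  refine ⟨L₁, L₂, rfl, fun p hp => ?_, fun p hp => ?_, hsort.1, hsort.2.1⟩
  · have h3 := hm p (by simp [hp])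
    have h4 := he p (by simp [hp])
    have h5 := h1 p hp
    have h6 : p.2 ≠ y := fun h => hs (by
      rw [show (c, y) = p from Prod.ext h5.symm h.symm]
      simp [hp])
    simp only [region, core, Set.mem_ofPred_eq] at h3
    omega
  · exact ⟨h2 p hp, (hm p (by simp [hp])).1, he p (by simp [hp]), hl p (by simp [hp]),
      hd p (by simp [hp])⟩

theorem SplitAt.admissible (h : SplitAt n c y L₁ L₂) {M : List (ℤ × ℤ)}
    (hM : ∀ p ∈ M, p ∈ core n ∧ ((p = (c, y + 2) ∧ (c, y + 2) ∉ L₁) ∨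
      (p = (c + 1, y + 1) ∧ (c + 1, y + 1) ∉ L₂)))
    (hsort : M.Pairwise fun p q => p.1 < q.1 ∨ p.1 = q.1 ∧ q.2 < p.2)
    (hc : 0 ≤ c) (hcn : c < 2 * n) (hcy : c ≤ y) (he : (c + y) % 2 = 0) :
    Admissible n c (y + 2) (L₁ ++ (M ++ L₂)) := by
  obtain ⟨ha, hr, hsa, hsr⟩ := h
  have hM' : ∀ p ∈ M, p ∈ core n ∧ (p.1 = c ∧ p.2 = y + 2 ∨ p.1 = c + 1 ∧ p.2 = y + 1) ∧
      (∀ q ∈ L₁, p.1 = q.1 → p.2 ≠ q.2) ∧ (∀ q ∈ L₂, p.1 = q.1 → p.2 ≠ q.2) := by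
    intro p hp
    obtain ⟨h1, ⟨rfl, h2⟩ | ⟨rfl, h2⟩⟩ := hM p hp
    · refine ⟨h1, Or.inl ⟨rfl, rfl⟩, fun q hq hpq hpq' => h2 ?_, fun q hq hpq => ?_⟩
      · rwa [show (c, y + 2) = q from Prod.ext hpq hpq']
      · have := (hr q hq).1
        simp only at hpq
        omega
    · refine ⟨h1, Or.inr ⟨rfl, rfl⟩, fun q hq hpq => ?_, fun q hq hpq hpq' => h2 ?_⟩
      · have := (ha q hq).1
        simp only at hpq
        omega
      · rwa [show (c + 1, y + 1) = q from Prod.ext hpq hpq']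
  have hall : ∀ p ∈ L₁ ++ (M ++ L₂), p ∈ L₁ ∨ p ∈ M ∨ p ∈ L₂ := by simp
  refine ⟨fun p hp => ?_, fun p hp => ?_, ?_, fun p hp hpc => ?_, fun p hp hpc => ?_⟩
  · rcases hall p hp with hp | hp | hp
    · have := ha p hp
      simp only [region, core, Set.mem_ofPred_eq]
      omega
    · have := hM' p hp
      exact ⟨this.1, by omega⟩
    · have := hr p hp
      exact ⟨this.2.1, by omega⟩
  · rcases hall p hp with hp | hp | hp
    · exact (ha p hp).2.2.2
    · have := (hM' p hp).2.1
      omega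
    · exact (hr p hp).2.2.1
  · rw [List.pairwise_append, List.pairwise_append]
    refine ⟨hsa, ⟨hsort, hsr, fun p hp q hq => ?_⟩, fun p hp q hq => ?_⟩
    · have h1 := hM' p hp
      have h2 := h1.2.2.2 q hq
      have h3 := hr q hq
      have h4 := h3.2.1
      have h5 := h1.1
      simp only [core, Set.mem_ofPred_eq] at h4 h5
      omega
    · have h3 := ha p hp
      rcases List.mem_append.1 hq with hq | hq
      · have h1 := hM' q hq
        have h2 := h1.2.2.1 p hp
        omega
      · have h1 := hr q hq
        omega
  · rcases hall p hp with hp | hp | hp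
    · have := ha p hp
      omega
    · have := hM' p hp
      omega
    · have := hr p hp
      omega
  · rcases hall p hp with hp | hp | hp
    · have := ha p hp
      omega
    · have := hM' p hp
      omega
    · have := hr p hp
      omega

open Classical in
theorem regionCount_of_mem (h : SplitAt n c y L₁ L₂) (hc : 0 ≤ c) (hcn : c < 2 * n)
    (hcy : c ≤ y) (hy : y ≤ 2 * n) (he : (c + y) % 2 = 0) :
    regionCount n c y (L₁ ++ (c, y) :: L₂) =
      (if (c, y + 2) ∈ core n ∧ (c, y + 2) ∉ L₁ then
        regionCount n c (y + 2) (L₁ ++ (c, y + 2) :: L₂) else 0) +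
      if (c + 1, y + 1) ∉ L₂ then
        regionCount n c (y + 2) (L₁ ++ (c + 1, y + 1) :: L₂) else 0 := by
  have hmem := mem_region_iff hc hcn hcy hy
  have hs : (c, y) ∉ region n c (y + 2) := notMem_region (by omega)
  have ho : (c, y + 1) ∉ region n c (y + 2) := notMem_region (by omega)
  have hup2 : (c, y + 2) ∉ L₂ := fun h' => by
    have := (h.right _ h').1
    omega
  have hright1 : (c + 1, y + 1) ∉ L₁ := fun h' => by
    have := (h.above _ h').1
    omega
  have hodd1 : (c, y + 1) ∉ L₁ := fun h' => by
    have := (h.above _ h').2.2.2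
    simp only at this
    omega
  have hodd2 : (c, y + 1) ∉ L₂ := fun h' => by
    have := (h.right _ h').2.2.1
    simp only at this
    omega
  have hr : (c + 1, y + 1) ∈ region n c (y + 2) := by
    simp only [region, core, Set.mem_ofPred_eq]
    omega
  have hu : (c, y + 2) ∈ region n c (y + 2) ↔ (c, y + 2) ∈ core n :=
    ⟨fun h' => h'.1, fun h' => ⟨h', by simp⟩⟩
  have e1 : (c, y + 2) ≠ (c, y) := by simp
  have e2 : (c, y + 2) ≠ (c, y + 1) := by simp
  have e3 : (c + 1, y + 1) ≠ (c, y) := by simp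
  have e4 : (c + 1, y + 1) ≠ (c, y + 1) := by simp
  have e5 : (c, y + 2) ≠ (c + 1, y + 1) := by simp
  have e6 : (c, y + 1) ≠ (c, y) := by simp
  have hadj : ∀ x ∈ core n, _ := fun x hx => adj_odd_iff (x := x) hc hcn hcy hy he hx
  unfold regionCount
  rw [pairingCount_eq_add (v := (c, y + 1)) (x := (c, y + 2)) (y := (c + 1, y + 1))
    ((region_finite n c y).subset Set.sdiff_subset) ?_ e5 ?_ ?_ ?_]
  · congr 1
    · refine if_congr ?_ (congrArg _ ?_) rfl
      · simp only [Set.mem_sdiff, Set.mem_ofPred_eq, List.mem_append, List.mem_cons, hmem, hu]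
        tauto
      · ext x
        simp only [Set.mem_sdiff, Set.mem_ofPred_eq, List.mem_append, List.mem_cons, hmem,
          Set.mem_insert_iff, Set.mem_singleton_iff]
        grind
    · refine if_congr ?_ (congrArg _ ?_) rfl
      · simp only [Set.mem_sdiff, Set.mem_ofPred_eq, List.mem_append, List.mem_cons, hmem]
        tauto
      · ext x
        simp only [Set.mem_sdiff, Set.mem_ofPred_eq, List.mem_append, List.mem_cons, hmem,
          Set.mem_insert_iff, Set.mem_singleton_iff]
        grind
  · simp only [Set.mem_sdiff, Set.mem_ofPred_eq, List.mem_append, List.mem_cons, hmem]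
    tauto
  · intro hx
    exact (hadj _ hx.1.1).2 (by simp)
  · intro hx
    exact (hadj _ hx.1.1).2 (by simp)
  · intro w hw hvw
    have := (hadj _ hw.1.1).1 hvw
    rcases this with rfl | h' | h'
    · exact absurd hw.2 (by simp)
    · exact Or.inl h'
    · exact Or.inr h'

theorem regionCount_of_notMem (h : SplitAt n c y L₁ L₂) (hc : 0 ≤ c) (hcn : c < 2 * n)
    (hcy : c < y) (hy : y ≤ 2 * n) (he : (c + y) % 2 = 0) :
    regionCount n c y (L₁ ++ L₂) = regionCount n c (y + 2) (L₁ ++ L₂) := by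
  have hmem := mem_region_iff hc hcn hcy.le hy
  have hs : (c, y) ∉ region n c (y + 2) := notMem_region (by omega)
  have ho : (c, y + 1) ∉ region n c (y + 2) := notMem_region (by omega)
  have hs1 : (c, y) ∉ L₁ := fun h' => by
    have := (h.above _ h').2.1
    simp only at this
    omega
  have hs2 : (c, y) ∉ L₂ := fun h' => by
    have := (h.right _ h').1
    omega
  have hodd1 : (c, y + 1) ∉ L₁ := fun h' => by
    have := (h.above _ h').2.2.2
    simp only at this
    omega
  have hodd2 : (c, y + 1) ∉ L₂ := fun h' => by
    have := (h.right _ h').2.2.1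
    simp only at this
    omega
  have hcore : (c, y) ∈ core n := ((hmem _).2 (Or.inl rfl)).1
  unfold regionCount
  rw [pairingCount_eq_of_unique (v := (c, y)) (x := (c, y + 1))
    ((region_finite n c y).subset Set.sdiff_subset) ?_ ?_ ?_ ?_]
  · refine congrArg _ ?_
    ext x
    simp only [Set.mem_sdiff, Set.mem_ofPred_eq, List.mem_append, hmem,
      Set.mem_insert_iff, Set.mem_singleton_iff]
    grind
  · simp only [Set.mem_sdiff, Set.mem_ofPred_eq, List.mem_append, hmem]
    tauto
  · simp only [Set.mem_sdiff, Set.mem_ofPred_eq, List.mem_append, hmem]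
    tauto
  · exact ((adj_odd_iff hc hcn hcy.le hy he hcore).2 (Or.inl rfl)).symm
  · intro w hw hvw
    rcases adj_even_imp he hw.1 hvw with h' | h'
    · exact h'
    · omega

open Classical in
theorem regionCount_of_notMem_diag (h : SplitAt n c c L₁ L₂) (hc : 0 ≤ c) (hcn : c < 2 * n) :
    regionCount n c c (L₁ ++ L₂) = regionCount n c (c + 2) (L₁ ++ L₂) +
      if (c + 1, c + 1) ∉ L₂ ∧ (c, c + 2) ∉ L₁ then
        regionCount n c (c + 2) (L₁ ++ (c, c + 2) :: (c + 1, c + 1) :: L₂) else 0 := by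
  have he : (c + c) % 2 = 0 := by omega
  have hmem := mem_region_iff hc hcn le_rfl hcn.le
  have hs : (c, c) ∉ region n c (c + 2) := notMem_region (by omega)
  have ho : (c, c + 1) ∉ region n c (c + 2) := notMem_region (by omega)
  have hs1 : (c, c) ∉ L₁ := fun h' => by
    have := (h.above _ h').2.1
    simp only at this
    omega
  have hs2 : (c, c) ∉ L₂ := fun h' => by
    have := (h.right _ h').1
    omega
  have hodd1 : (c, c + 1) ∉ L₁ := fun h' => by
    have := (h.above _ h').2.2.2
    simp only at this
    omega
  have hodd2 : (c, c + 1) ∉ L₂ := fun h' => by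
    have := (h.right _ h').2.2.1
    simp only at this
    omega
  have hup2 : (c, c + 2) ∉ L₂ := fun h' => by
    have := (h.right _ h').1
    omega
  have hright1 : (c + 1, c + 1) ∉ L₁ := fun h' => by
    have := (h.above _ h').1
    omega
  have hr : (c + 1, c + 1) ∈ region n c (c + 2) := by
    simp only [region, core, Set.mem_ofPred_eq]
    omega
  have hu : (c, c + 2) ∈ region n c (c + 2) := by
    refine ⟨?_, Or.inr ⟨rfl, le_rfl⟩⟩
    simp only [core, Set.mem_ofPred_eq]
    omega
  have e1 : (c, c + 2) ≠ (c, c) := by simp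
  have e2 : (c, c + 2) ≠ (c, c + 1) := by simp
  have e3 : (c + 1, c + 1) ≠ (c, c) := by simp
  have e4 : (c + 1, c + 1) ≠ (c, c + 1) := by simp
  have e5 : (c, c + 2) ≠ (c + 1, c + 1) := by simp
  have e6 : (c, c + 1) ≠ (c, c) := by simp
  have hcore : (c, c) ∈ core n := ((hmem _).2 (Or.inl rfl)).1
  have hadj : ∀ x ∈ core n, _ := fun x hx => adj_odd_iff (x := x) hc hcn le_rfl hcn.le he hx
  have hfin := fun T => (region_finite n c c).subset (Set.sdiff_subset (t := T))
  unfold regionCount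
  rw [pairingCount_eq_add (v := (c, c)) (x := (c, c + 1)) (y := (c + 1, c + 1))
    (hfin _) ?_ e4.symm ?_ ?_ ?_]
  · congr 1
    · rw [if_pos]
      · refine congrArg _ ?_
        ext x
        simp only [Set.mem_sdiff, Set.mem_ofPred_eq, List.mem_append, hmem,
          Set.mem_insert_iff, Set.mem_singleton_iff]
        grind
      · simp only [Set.mem_sdiff, Set.mem_ofPred_eq, List.mem_append, hmem]
        tauto
    · rw [ite_and]
      refine if_congr ?_ ?_ rfl
      · simp only [Set.mem_sdiff, Set.mem_ofPred_eq, List.mem_append, hmem]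
        tauto
      · rw [pairingCount_eq_add (v := (c, c + 1)) (x := (c, c + 2)) (y := (c + 1, c + 1))
          ((hfin _).subset Set.sdiff_subset) ?_ e5 ?_ ?_ ?_]
        · rw [if_neg (c := (c + 1, c + 1) ∈ (_ \ {(c, c), (c + 1, c + 1)} : Set (ℤ × ℤ)))
            (fun h => h.2 (by simp)), add_zero]
          refine if_congr ?_ (congrArg _ ?_) rfl
          · simp only [Set.mem_sdiff, Set.mem_ofPred_eq, List.mem_append, hmem,
              Set.mem_insert_iff, Set.mem_singleton_iff]
            tauto
          · ext x
            simp only [Set.mem_sdiff, Set.mem_ofPred_eq, List.mem_append, List.mem_cons, hmem,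
              Set.mem_insert_iff, Set.mem_singleton_iff]
            grind
        · simp only [Set.mem_sdiff, Set.mem_ofPred_eq, List.mem_append, hmem,
            Set.mem_insert_iff, Set.mem_singleton_iff]
          tauto
        · intro hx
          exact (hadj _ hx.1.1.1).2 (by simp)
        · intro hx
          exact (hadj _ hx.1.1.1).2 (by simp)
        · intro w hw hvw
          rcases (hadj _ hw.1.1.1).1 hvw with rfl | h' | h'
          · exact absurd hw.2 (by simp)
          · exact Or.inl h'
          · exact Or.inr h'
  · simp only [Set.mem_sdiff, Set.mem_ofPred_eq, List.mem_append, hmem]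
    tauto
  · intro _
    exact ((hadj _ hcore).2 (Or.inl rfl)).symm
  · intro _
    exact adj_diag hc hcn
  · intro w hw hvw
    rcases adj_even_imp he hw.1 hvw with h' | h'
    · exact Or.inl h'
    · exact Or.inr h'.2

theorem regionCount_sink_of_mem {L : List (ℤ × ℤ)} (hc : 0 ≤ c) (hcn : c < 2 * n)
    (h : Admissible n c (2 * n + 1) ((c, 2 * n + 1) :: L)) :
    regionCount n c (2 * n + 1) ((c, 2 * n + 1) :: L) = regionCount n (c + 1) (c + 1) L ∧
      Admissible n (c + 1) (c + 1) L := by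
  obtain ⟨hm, he, hs, hl, hd⟩ := h
  rw [List.pairwise_cons] at hs
  have hL : ∀ p ∈ L, p ∈ region n (c + 1) (c + 1) := fun p hp => by
    have h1 := hs.1 p hp
    have h2 := hm p (by simp [hp])
    simp only [region, core, Set.mem_ofPred_eq] at h1 h2 ⊢
    omega
  refine ⟨?_, hL, fun p hp => he p (by simp [hp]), hs.2,
    fun p hp hpc => Or.inr (hd p (by simp [hp]) (by omega)),
    fun p hp hpc => hd p (by simp [hp]) (by omega)⟩
  unfold regionCount
  refine congrArg _ ?_
  have hmem : ∀ x, x ∈ region n c (2 * n + 1) ↔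
      x = (c, 2 * (n : ℤ) + 1) ∨ x ∈ region n (c + 1) (c + 1) := by
    rintro ⟨u, w⟩
    simp only [region, core, Set.mem_ofPred_eq, Prod.mk.injEq]
    omega
  have hno : (c, 2 * (n : ℤ) + 1) ∉ region n (c + 1) (c + 1) := by
    simp only [region, Set.mem_ofPred_eq]
    omega
  ext x
  simp only [Set.mem_sdiff, Set.mem_ofPred_eq, List.mem_cons, hmem]
  grind

theorem regionCount_sink_of_notMem {L : List (ℤ × ℤ)} (hc : 0 ≤ c) (hcn : c < 2 * n)
    (he : (c + (2 * n + 1)) % 2 = 0) (h : (c, 2 * (n : ℤ) + 1) ∉ L) :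
    regionCount n c (2 * n + 1) L = 0 := by
  refine pairingCount_eq_zero (v := (c, 2 * (n : ℤ) + 1))
    ((region_finite n c _).subset Set.sdiff_subset) ⟨⟨?_, Or.inr ⟨rfl, le_rfl⟩⟩, h⟩
    fun w hw hvw => ?_
  · simp only [core, Set.mem_ofPred_eq]
    omega
  · rcases adj_even_imp he hw.1 hvw with rfl | ⟨h', -⟩
    · have := hw.1.1
      simp only [core, Set.mem_ofPred_eq] at this
      omega
    · omega

open Classical in
theorem wedge_of_mem (hcn : c < 2 * n) (hcy : c ≤ y) (hy : y ≤ 2 * n) (he : (c + y) % 2 = 0)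
    (hc : 0 ≤ c) :
    wedge n (L₁ ++ (c, y) :: L₂) =
      (if (c, y + 2) ∈ core n ∧ (c, y + 2) ∉ L₁ then wedge n (L₁ ++ (c, y + 2) :: L₂) else 0) +
      if (c + 1, y + 1) ∉ L₂ then wedge n (L₁ ++ (c + 1, y + 1) :: L₂) else 0 := by
  rw [wedge_append, wedge_cons, pointElt_eq_add hcn hcy hy he, add_mul, mul_add]
  congr 1
  · split_ifs with h
    · rw [wedge_append, wedge_cons]
    · by_cases hu : (c, y + 2) ∈ L₁
      · rw [← mul_assoc, wedge_mul_pointElt_of_mem hu, zero_mul]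
      · rw [pointElt_eq_zero hcn.le ?_ (by omega), zero_mul, mul_zero]
        by_contra h'
        refine h ⟨?_, hu⟩
        simp only [core, Set.mem_ofPred_eq]
        omega
  · split_ifs with h
    · rw [pointElt_mul_wedge_of_mem h, mul_zero]
    · rw [wedge_append, wedge_cons]

open Classical in
theorem wedge_mul_diag (hcn : c < 2 * n) :
    wedge n (L₁ ++ L₂) * (1 + pointElt n (c, c) * pointElt n (c + 1, c + 1)) =
      wedge n (L₁ ++ L₂) + if (c + 1, c + 1) ∉ L₂ ∧ (c, c + 2) ∉ L₁ then
        wedge n (L₁ ++ (c, c + 2) :: (c + 1, c + 1) :: L₂) else 0 := by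
  have hsq : pointElt n (c + 1, c + 1) * pointElt n (c + 1, c + 1) = 0 :=
    ExteriorAlgebra.ι_sq_zero _
  rw [mul_add, mul_one, pointElt_eq_add hcn le_rfl hcn.le (by omega), add_mul, hsq, add_zero,
    wedge_append, mul_assoc, ← (pointElt_mul_pointElt_commute n _ _ L₂).eq]
  congr 1
  split_ifs with h
  · rw [wedge_append, wedge_cons, wedge_cons, mul_assoc]
  · by_cases hr : (c + 1, c + 1) ∈ L₂
    · rw [mul_assoc, pointElt_mul_wedge_of_mem hr, mul_zero, mul_zero]
    · have hu : (c, c + 2) ∈ L₁ := by tauto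
      rw [mul_assoc, ← mul_assoc, wedge_mul_pointElt_of_mem hu, zero_mul]

theorem wedge_mul_diag_of_mem :
    wedge n (L₁ ++ (c, y) :: L₂) * (1 + pointElt n (c, y) * pointElt n (c + 1, y + 1)) =
      wedge n (L₁ ++ (c, y) :: L₂) := by
  have hsq : pointElt n (c, y) * pointElt n (c, y) = 0 := ExteriorAlgebra.ι_sq_zero _
  rw [mul_add, mul_one, ← (pointElt_mul_pointElt_commute n _ _ _).eq, add_eq_left,
    wedge_append, ← mul_assoc, (pointElt_mul_pointElt_commute n _ _ L₁).eq, mul_assoc, mul_assoc,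
    ← wedge_cons, pointElt_mul_wedge_of_mem (by simp), mul_zero]

/-- A linear functional that counts the matchings of the region above `(c, y)` also counts those
of the region above a removed point `(c, y)`. -/
theorem regionCount_eq_of_mem (hc : 0 ≤ c) (hcn : c < 2 * n) (hcy : c ≤ y) (hy : y ≤ 2 * n)
    (he : (c + y) % 2 = 0) {f : SinkAlgebra →ₗ[ℤ] ℤ}
    (ih : ∀ L, Admissible n c (y + 2) L → (regionCount n c (y + 2) L : ℤ) = f (wedge n L))
    (h : Admissible n c y L) (hs : (c, y) ∈ L) :
    (regionCount n c y L : ℤ) = f (wedge n L) := by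
  classical
  obtain ⟨L₁, L₂, rfl, hsp⟩ := h.split_of_mem hs
  rw [regionCount_of_mem hsp hc hcn hcy hy he, wedge_of_mem hcn hcy hy he hc, map_add,
    Nat.cast_add]
  congr 1
  · split_ifs with hu
    · refine ih _ (hsp.admissible (M := [(c, y + 2)]) ?_ ?_ hc hcn hcy he)
      · simpa using hu
      · simp
    · simp
  · split_ifs with hr
    · simp
    · refine ih _ (hsp.admissible (M := [(c + 1, y + 1)]) ?_ ?_ hc hcn hcy he)
      · have : (c + 1, y + 1) ∈ core n := by
          simp only [core, Set.mem_ofPred_eq]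
          omega
        simpa using ⟨this, hr⟩
      · simp

theorem regionCount_eq_of_notMem (hc : 0 ≤ c) (hcn : c < 2 * n) (hcy : c < y) (hy : y ≤ 2 * n)
    (he : (c + y) % 2 = 0) {f : SinkAlgebra →ₗ[ℤ] ℤ}
    (ih : ∀ L, Admissible n c (y + 2) L → (regionCount n c (y + 2) L : ℤ) = f (wedge n L))
    (h : Admissible n c y L) (hs : (c, y) ∉ L) :
    (regionCount n c y L : ℤ) = f (wedge n L) := by
  obtain ⟨L₁, L₂, rfl, hsp⟩ := h.split_of_notMem hs he
  rw [regionCount_of_notMem hsp hc hcn hcy hy he]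
  exact ih _ (hsp.admissible (M := []) (by simp) (by simp) hc hcn hcy.le he)

theorem regionCount_eq_of_diag (hc : 0 ≤ c) (hcn : c < 2 * n) {f : SinkAlgebra →ₗ[ℤ] ℤ}
    (ih : ∀ L, Admissible n c (c + 2) L → (regionCount n c (c + 2) L : ℤ) = f (wedge n L))
    (h : Admissible n c c L) :
    (regionCount n c c L : ℤ) =
      f (wedge n L * (1 + pointElt n (c, c) * pointElt n (c + 1, c + 1))) := by
  classical
  by_cases hs : (c, c) ∈ L
  · rw [regionCount_eq_of_mem hc hcn le_rfl hcn.le (by omega) ih h hs]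
    obtain ⟨L₁, L₂, rfl, -⟩ := h.split_of_mem hs
    rw [wedge_mul_diag_of_mem]
  · obtain ⟨L₁, L₂, rfl, hsp⟩ := h.split_of_notMem hs (by omega)
    rw [regionCount_of_notMem_diag hsp hc hcn, wedge_mul_diag hcn, map_add, Nat.cast_add]
    congr 1
    · exact ih _ (hsp.admissible (M := []) (by simp) (by simp) hc hcn le_rfl (by omega))
    · split_ifs with hu
      · refine ih _ (hsp.admissible (M := [(c, c + 2), (c + 1, c + 1)]) ?_ ?_ hc hcn le_rfl
          (by omega))
        · have h1 : (c + 1, c + 1) ∈ core n := by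
            simp only [core, Set.mem_ofPred_eq]
            omega
          have h2 : (c, c + 2) ∈ core n := by
            simp only [core, Set.mem_ofPred_eq]
            omega
          simpa [h1, h2] using hu.symm
        · simp
      · simp

end Steps

theorem pointElt_diag {n : ℕ} {c : ℤ} {a : ℕ} (ha : c + a = 2 * n) :
    pointElt n (c, c) = ExteriorAlgebra.ι ℤ (pathVec a 0) := by
  rw [pointElt, pointVec]
  congr 2
  · simp only
    omega
  · simp

theorem topCoeff_zero_ι : topCoeff 0 (ExteriorAlgebra.ι ℤ (pathVec 0 0)) = 1 := by
  rw [← mul_one (ExteriorAlgebra.ι ℤ (pathVec 0 0)), topCoeff, LinearMap.comp_apply, coord_ι_mul,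
    coord_one, pathVec_apply_zero]
  simp

theorem regionCount_eq_base {n : ℕ} {L : List (ℤ × ℤ)} (h : Admissible n (2 * n) (2 * n) L) :
    (regionCount n (2 * n) (2 * n) L : ℤ) = topCoeff 0 (wedge n L) := by
  have hreg : ∀ x, x ∈ region n (2 * n) (2 * n) ↔ x = (2 * (n : ℤ), 2 * (n : ℤ)) := by
    rintro ⟨u, w⟩
    simp only [region, core, Set.mem_ofPred_eq, Prod.mk.injEq]
    omega
  have hm : ∀ p ∈ L, p = (2 * (n : ℤ), 2 * (n : ℤ)) := fun p hp => (hreg p).1 (h.mem p hp)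
  match L, hm, h.sorted with
  | [], _, _ =>
    rw [regionCount, pairingCount_eq_zero (v := (2 * (n : ℤ), 2 * (n : ℤ)))
      ((region_finite n _ _).subset Set.sdiff_subset) ⟨(hreg _).2 rfl, by simp⟩]
    · simp [wedge, topCoeff, coord_one]
    · intro w hw hvw
      rw [(hreg w).1 hw.1] at hvw
      exact hvw.ne rfl
  | [p], hm, _ =>
    obtain rfl := hm p (by simp)
    rw [regionCount, show region n (2 * n) (2 * n) \ {x | x ∈ [(2 * (n : ℤ), 2 * (n : ℤ))]} = ∅ by
      ext x
      simp [hreg], pairingCount_empty, wedge_cons, pointElt_diag (a := 0) (by simp)]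
    rw [wedge, List.map_nil, List.prod_nil, mul_one, topCoeff_zero_ι, Nat.cast_one]
  | p :: q :: L, hm, hs =>
    rw [List.pairwise_cons] at hs
    have := hs.1 q (by simp)
    rw [hm p (by simp), hm q (by simp)] at this
    omega

theorem coord_wedge_mul_pairProd {n a : ℕ} {c : ℤ} {k : ℕ} (ha : c + (a + 1) = 2 * n)
    (hk : a + 1 < 2 * k) {L : List (ℤ × ℤ)} (hL : ∀ p ∈ L, c < p.1) :
    coord k (wedge n L * pairProd a) = 0 := by
  rw [wedge_eq]
  refine coord_list_prod_mul (fun x hx => ?_) (coord_pairProd hk)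
  obtain ⟨p, hp, rfl⟩ := List.mem_map.1 hx
  have := hL p hp
  exact pathVec_apply_eq_zero (by omega)

theorem regionCount_eq_sink {n a : ℕ} {c : ℤ} (hc : 0 ≤ c) (ha : c + (a + 1) = 2 * n)
    (he : (c + (2 * n + 1)) % 2 = 0)
    (ih : ∀ L, Admissible n (c + 1) (c + 1) L →
      (regionCount n (c + 1) (c + 1) L : ℤ) = topCoeff ((a + 1) / 2) (wedge n L * pairProd a))
    {L : List (ℤ × ℤ)} (h : Admissible n c (2 * n + 1) L) :
    (regionCount n c (2 * n + 1) L : ℤ) = topCoeff ((a + 1 + 1) / 2) (wedge n L * pairProd a) := by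
  obtain ⟨k, rfl⟩ : ∃ k, a = 2 * k := ⟨a / 2, by omega⟩
  rw [show (2 * k + 1 + 1) / 2 = k + 1 by omega, topCoeff_succ]
  have hcn : c < 2 * n := by omega
  have hcases : (∀ p ∈ L, c < p.1) ∨ ∃ L', L = (c, 2 * (n : ℤ) + 1) :: L' := by
    cases L with
    | nil => exact Or.inl (by simp)
    | cons p L' =>
      have hs := (List.pairwise_cons.1 h.sorted).1
      have hp := h.mem p (by simp)
      simp only [region, core, Set.mem_ofPred_eq] at hp
      by_cases hpc : c < p.1
      · refine Or.inl fun q hq => ?_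
        rcases List.mem_cons.1 hq with rfl | hq
        · exact hpc
        · have := hs q hq
          omega
      · exact Or.inr ⟨L', congrArg (· :: L') (Prod.ext (by simp only; omega)
          (by simp only; omega))⟩
  rcases hcases with hL | ⟨L', rfl⟩
  · rw [regionCount_sink_of_notMem hc hcn he fun hm => (hL _ hm).ne rfl,
      coord_wedge_mul_pairProd ha (by omega) hL, map_zero, Nat.cast_zero]
  · obtain ⟨hcount, hadm⟩ := regionCount_sink_of_mem hc hcn h
    have hL' : ∀ p ∈ L', c < p.1 := fun p hp => by
      have := (hadm.mem p hp).2
      omega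
    rw [hcount, ih _ hadm, wedge_cons, mul_assoc, pointElt, coord_ι_mul,
      coord_wedge_mul_pairProd ha (by omega) hL', mul_zero, sub_zero, pointVec,
      show (2 * (n : ℤ) - c).toNat = 2 * k + 1 by omega,
      show ((2 * (n : ℤ) + 1 - c) / 2).toNat = k + 1 by omega, pathVec_apply_self (by omega),
      one_smul, show (2 * k + 1) / 2 = k by omega]

/-- The matchings of the region to the right of column `c` that avoid a list of points are counted
by a coefficient in the exterior algebra over the sinks. -/
theorem regionCount_eq_topCoeff {n : ℕ} (a : ℕ) {c : ℤ} (hc : 0 ≤ c) (ha : c + a = 2 * n)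
    {L : List (ℤ × ℤ)} (h : Admissible n c c L) :
    (regionCount n c c L : ℤ) = topCoeff ((a + 1) / 2) (wedge n L * pairProd a) := by
  induction a generalizing c L with
  | zero =>
    obtain rfl : c = 2 * n := by omega
    rw [pairProd, mul_one]
    exact regionCount_eq_base h
  | succ a ih =>
    have hcn : c < 2 * n := by omega
    have ih' := fun L => ih (c := c + 1) (by omega) (by omega) (L := L)
    set f : SinkAlgebra →ₗ[ℤ] ℤ :=
      topCoeff ((a + 1 + 1) / 2) ∘ₗ LinearMap.mulRight ℤ (pairProd a) with hf
    have hf' : ∀ x, f x = topCoeff ((a + 1 + 1) / 2) (x * pairProd a) := fun _ => rfl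
    have key : ∀ d : ℕ, ∀ y : ℤ, c < y → (c + y) % 2 = 0 → 2 * (n : ℤ) + 2 ≤ y + d →
        y ≤ 2 * n + 2 →
        ∀ L, Admissible n c y L → (regionCount n c y L : ℤ) = f (wedge n L) := by
      intro d
      induction d using Nat.strong_induction_on with
      | _ d ihd =>
      intro y hcy he hd hy L hL
      by_cases hy1 : y ≤ 2 * n
      · have hup := ihd (d - 2) (by omega) (y + 2) (by omega) (by omega) (by omega)
          (by omega)
        by_cases hs : (c, y) ∈ L
        · exact regionCount_eq_of_mem hc hcn hcy.le hy1 he hup hL hs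
        · exact regionCount_eq_of_notMem hc hcn hcy hy1 he hup hL hs
      · obtain rfl | rfl : y = 2 * n + 2 ∨ y = 2 * n + 1 := by omega
        · rw [regionCount, region_next le_rfl, ← regionCount, ih' _ (hL.next le_rfl), hf',
            show (a + 1 + 1) / 2 = (a + 1) / 2 by omega]
        · exact regionCount_eq_sink hc (by omega) he ih' hL
    have hdiag := regionCount_eq_of_diag hc hcn (f := f)
      (key (2 * n + 2) (c + 2) (by omega) (by omega) (by omega) (by omega)) h
    rw [hdiag, hf', pointElt_diag ha, pointElt_diag (a := a) (by omega), mul_assoc]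
    rfl

/-- The exterior algebra element of the diagonal point `(j, j)` of `G_n`. -/
noncomputable def diagElt (n j : ℕ) : SinkAlgebra :=
  ExteriorAlgebra.ι ℤ (pathVec (2 * n - j) 0)

/-- The functional computing numbers of matchings of `core n`. -/
noncomputable def matchingCoeff (n : ℕ) : SinkAlgebra →ₗ[ℤ] ℤ :=
  topCoeff n ∘ₗ LinearMap.mulRight ℤ (pairProd (2 * n))

theorem matchingCoeff_apply (n : ℕ) (x : SinkAlgebra) :
    matchingCoeff n x = topCoeff n (x * pairProd (2 * n)) := rfl

/-- The factor accounting for the corner of `G_n` when `b_n` is kept. -/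
noncomputable def keptElt (n : ℕ) : SinkAlgebra :=
  if n % 2 = 1 then 1 else ExteriorAlgebra.ι ℤ (pathVec 0 0)

/-- The factor accounting for the corner of `G_n` when `b_n` is removed. -/
noncomputable def removedElt (n : ℕ) : SinkAlgebra :=
  if n % 2 = 1 then ExteriorAlgebra.ι ℤ (pathVec 0 0) else 1

/-- The diagonal points with coordinates in a given list. -/
def diagPoints (L : List ℕ) : List (ℤ × ℤ) := L.map fun j : ℕ => ((j : ℤ), (j : ℤ))

theorem diagElt_two_mul (n : ℕ) : diagElt n (2 * n) = ExteriorAlgebra.ι ℤ (pathVec 0 0) := by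
  rw [diagElt, Nat.sub_self]

theorem pairingCount_core {n : ℕ} {L : List ℕ} (hs : L.Pairwise (· < ·))
    (hL : ∀ j ∈ L, j ≤ 2 * n) :
    (pairingCount (Gph n) (core n \ {x | x ∈ diagPoints L}) : ℤ) =
      matchingCoeff n (L.map (diagElt n)).prod := by
  have hmem : ∀ p ∈ diagPoints L, ∃ j : ℕ, j ≤ 2 * n ∧ p = ((j : ℤ), (j : ℤ)) := by
    intro p hp
    obtain ⟨j, hj, rfl⟩ := List.mem_map.1 hp
    exact ⟨j, hL j hj, rfl⟩
  have hadm : Admissible n 0 0 (diagPoints L) := by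
    refine ⟨fun p hp => ?_, fun p hp => ?_, ?_, fun p hp _ => ?_, fun p hp _ => ?_⟩
    · obtain ⟨j, hj, rfl⟩ := hmem p hp
      rw [region_zero]
      simp only [core, Set.mem_ofPred_eq]
      omega
    · obtain ⟨j, hj, rfl⟩ := hmem p hp
      simp only
      omega
    · exact List.pairwise_map.2 (hs.imp fun h => Or.inl (by simpa using h))
    · obtain ⟨j, hj, rfl⟩ := hmem p hp
      exact Or.inr rfl
    · obtain ⟨j, hj, rfl⟩ := hmem p hp
      rfl
  have hcount := regionCount_eq_topCoeff (2 * n) le_rfl (by simp) hadm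
  rw [regionCount, region_zero, show (2 * n + 1) / 2 = n by omega] at hcount
  rw [hcount, matchingCoeff_apply, wedge, diagPoints, List.map_map]
  congr 3
  refine List.map_congr_left fun j hj => ?_
  have := hL j hj
  exact pointElt_diag (by omega)

theorem pairingCount_core_concat {n : ℕ} {L : List ℕ} (hs : L.Pairwise (· < ·))
    (hL : ∀ j ∈ L, j < 2 * n) :
    (pairingCount (Gph n) (core n \ {x | x ∈ diagPoints L ∨ x = (2 * (n : ℤ), 2 * (n : ℤ))}) : ℤ) =
      matchingCoeff n ((L.map (diagElt n)).prod * ExteriorAlgebra.ι ℤ (pathVec 0 0)) := by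
  have := pairingCount_core (n := n) (L := L ++ [2 * n])
    (List.pairwise_append.2 ⟨hs, by simp, by simpa using hL⟩)
    (by simpa [or_imp, forall_and] using fun j hj => (hL j hj).le)
  rw [List.map_append, List.prod_append, List.map_singleton, List.prod_singleton,
    diagElt_two_mul] at this
  rw [← this]
  congr 3
  ext x
  simp [diagPoints]

theorem Zpm_eq_pairingCount (n : ℕ) (U : Set (ℤ × ℤ)) :
    Zpm n U = pairingCount (Gph n) (Vset n \ U) :=
  card_perfectMatching_induce _ _

theorem mem_Vset_iff_of_odd {n : ℕ} (h : n % 2 = 1) (x : ℤ × ℤ) : x ∈ Vset n ↔ x ∈ core n := by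
  simp only [Vset, memV, core, Set.mem_ofPred_eq, h, true_and]

theorem mem_Vset_iff_of_even {n : ℕ} (h : n % 2 = 0) (x : ℤ × ℤ) :
    x ∈ Vset n ↔ x ∈ core n ∨ x = (2 * (n : ℤ), 2 * (n : ℤ) + 1) := by
  obtain ⟨u, w⟩ := x
  simp only [Vset, memV, core, Set.mem_ofPred_eq, Prod.mk.injEq]
  omega

theorem Zpm_diagPoints {n : ℕ} {L : List ℕ} (hs : L.Pairwise (· < ·))
    (hL : ∀ j ∈ L, j < 2 * n) :
    (Zpm n {x | x ∈ diagPoints L} : ℤ) =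
      matchingCoeff n ((L.map (diagElt n)).prod * keptElt n) := by
  rw [Zpm_eq_pairingCount]
  rcases Nat.mod_two_eq_zero_or_one n with h | h
  · rw [keptElt, if_neg (by omega), ← pairingCount_core_concat hs hL,
      pairingCount_eq_of_unique (v := (2 * (n : ℤ), 2 * (n : ℤ) + 1))
        (x := (2 * (n : ℤ), 2 * (n : ℤ)))]
    · congr 2
      ext x
      simp only [Set.mem_sdiff, mem_Vset_iff_of_even h, Set.mem_ofPred_eq, Set.mem_insert_iff,
        Set.mem_singleton_iff]
      have : (2 * (n : ℤ), 2 * (n : ℤ) + 1) ∉ core n := by simp [core]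
      grind
    · refine (Set.Finite.subset ((core_finite n).insert (2 * (n : ℤ), 2 * (n : ℤ) + 1))
        fun x hx => ?_)
      exact ((mem_Vset_iff_of_even h x).1 hx.1).symm
    · refine ⟨(mem_Vset_iff_of_even h _).2 (Or.inr rfl), fun hx => ?_⟩
      obtain ⟨j, hj, hj'⟩ := List.mem_map.1 hx
      rw [Prod.mk.injEq] at hj'
      omega
    · refine ⟨(mem_Vset_iff_of_even h _).2 (Or.inl (by simp [core])), fun hx => ?_⟩
      obtain ⟨j, hj, hj'⟩ := List.mem_map.1 hx
      have := hL j hj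
      rw [Prod.mk.injEq] at hj'
      omega
    · exact Or.inr (Or.inr (Or.inl (by simp [h])))
    · rintro ⟨u, w⟩ - hvw
      simp only [Gph, edgeRel, Int.odd_iff] at hvw
      rw [Prod.mk.injEq]
      omega
  · rw [keptElt, if_pos h, mul_one, ← pairingCount_core hs fun j hj => (hL j hj).le]
    congr 2
    ext x
    rw [Set.mem_sdiff, Set.mem_sdiff, mem_Vset_iff_of_odd h]

theorem Zpm_diagPoints_bvertex {n : ℕ} {L : List ℕ} (hs : L.Pairwise (· < ·))
    (hL : ∀ j ∈ L, j < 2 * n) :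
    (Zpm n {x | x ∈ diagPoints L ∨ x = bvertex n} : ℤ) =
      matchingCoeff n ((L.map (diagElt n)).prod * removedElt n) := by
  rw [Zpm_eq_pairingCount]
  rcases Nat.mod_two_eq_zero_or_one n with h | h
  · rw [removedElt, if_neg (by omega), mul_one, ← pairingCount_core hs fun j hj => (hL j hj).le]
    congr 2
    ext x
    have : (2 * (n : ℤ), 2 * (n : ℤ) + 1) ∉ core n := by simp [core]
    simp only [Set.mem_sdiff, mem_Vset_iff_of_even h, Set.mem_ofPred_eq, bvertex, h,
      Nat.cast_zero, sub_zero]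
    grind
  · rw [removedElt, if_pos h, ← pairingCount_core_concat hs hL]
    congr 2
    ext x
    simp only [Set.mem_sdiff, mem_Vset_iff_of_odd h, Set.mem_ofPred_eq, bvertex, h,
      Nat.cast_one, add_sub_cancel_right]

theorem Zpm_empty (n : ℕ) : (Zpm n ∅ : ℤ) = matchingCoeff n (keptElt n) := by
  have := Zpm_diagPoints (n := n) (L := []) (by simp) (by simp)
  simpa [diagPoints] using this

theorem Zpm_pair {n i j : ℕ} (hij : i < j) (hj : j < 2 * n) :
    (Zpm n {((i : ℤ), (i : ℤ)), ((j : ℤ), (j : ℤ))} : ℤ) =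
      matchingCoeff n (diagElt n i * diagElt n j * keptElt n) := by
  have := Zpm_diagPoints (n := n) (L := [i, j]) (by simpa using hij)
    (by simpa using ⟨hij.trans hj, hj⟩)
  simpa [diagPoints, Set.insert_def] using this

theorem Zpm_bvertex {n j : ℕ} (hj : j < 2 * n) :
    (Zpm n {((j : ℤ), (j : ℤ)), bvertex n} : ℤ) =
      matchingCoeff n (diagElt n j * removedElt n) := by
  have := Zpm_diagPoints_bvertex (n := n) (L := [j]) (by simp) (by simpa using hj)
  simpa [diagPoints, Set.insert_def] using this

theorem coord_zero_pairProd (a : ℕ) :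
    coord 0 (pairProd a) =
      (ExteriorAlgebra.ι ℤ (pathVec 0 0) - ExteriorAlgebra.ι ℤ (pathVec a 0)) * pairProd a := by
  induction a with
  | zero => simp [pairProd, coord_one]
  | succ a ih =>
    have hsq := ExteriorAlgebra.ι_sq_zero (R := ℤ) (pathVec (a + 1) 0)
    have hsq' := ExteriorAlgebra.ι_sq_zero (R := ℤ) (pathVec a 0)
    have hcomm := ExteriorAlgebra.commute_ι_mul_ι (R := ℤ) (pathVec (a + 1) 0) (pathVec a 0)
      (pathVec 0 0)
    rw [pairProd, add_mul, one_mul, mul_assoc, map_add, coord_ι_mul, coord_ι_mul, ih,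
      pathVec_apply_zero, pathVec_apply_zero, one_smul, one_smul]
    generalize ExteriorAlgebra.ι ℤ (pathVec (a + 1) 0) = s at *
    generalize ExteriorAlgebra.ι ℤ (pathVec a 0) = t at *
    generalize ExteriorAlgebra.ι ℤ (pathVec 0 0) = e at *
    generalize pairProd a = P at *
    have h1 : s * (t * (t * P)) = 0 := by rw [← mul_assoc t, hsq', zero_mul, mul_zero]
    have h2 : s * (s * (t * P)) = 0 := by rw [← mul_assoc s, hsq, zero_mul]
    have h3 : e * (s * (t * P)) = s * (t * (e * P)) := by
      rw [← mul_assoc s t P, ← mul_assoc e, ← hcomm.eq, mul_assoc, mul_assoc]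
    simp only [sub_mul, mul_sub, mul_add, h1, h2, h3]
    abel

theorem matchingCoeff_keptElt {n j : ℕ} :
    matchingCoeff n (keptElt n) = matchingCoeff n (diagElt n j * removedElt n) +
      matchingCoeff n (diagElt n 0 * diagElt n j * keptElt n) := by
  have hcoord := coord_zero_pairProd (2 * n)
  have hsq := ExteriorAlgebra.ι_sq_zero (R := ℤ) (pathVec 0 0)
  have hs := ExteriorAlgebra.ι_mul_ι_comm (R := ℤ) (pathVec (2 * n) 0) (pathVec (2 * n - j) 0)
  have hcomm := ExteriorAlgebra.commute_ι_mul_ι (R := ℤ) (pathVec (2 * n - j) 0) (pathVec 0 0)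
    (pathVec (2 * n) 0)
  have key : topCoeff n (coord 0 (diagElt n j * (keptElt n * pairProd (2 * n)))) = 0 :=
    topCoeff_coord_zero _ _
  rw [← map_add, ← sub_eq_zero, ← map_sub, matchingCoeff_apply, ← key]
  congr 1
  unfold keptElt removedElt diagElt
  split_ifs
  · rw [one_mul, coord_ι_mul, hcoord, pathVec_apply_zero, one_smul, Nat.sub_zero, hs]
    noncomm_ring
  · rw [coord_ι_mul, coord_ι_mul, hcoord, pathVec_apply_zero, pathVec_apply_zero, one_smul,
      one_smul, Nat.sub_zero, mul_assoc (ExteriorAlgebra.ι ℤ (pathVec (2 * n) 0)), ← hcomm.eq]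
    generalize ExteriorAlgebra.ι ℤ (pathVec 0 0) = e at *
    have h1 : e * (e * pairProd (2 * n)) = 0 := by rw [← mul_assoc, hsq, zero_mul]
    simp only [sub_mul, mul_sub, add_mul, h1, mul_one, mul_assoc, mul_zero]
    abel

theorem removedElt_succ (m : ℕ) : removedElt (m + 1) = keptElt m := by
  unfold removedElt keptElt
  split_ifs <;> first | rfl | omega

theorem diagElt_succ (m j : ℕ) : diagElt (m + 1) (j + 2) = diagElt m j := by
  rw [diagElt, diagElt, show 2 * (m + 1) - (j + 2) = 2 * m - j by omega]

theorem keptElt_commute_pairProd (m a : ℕ) : Commute (pairProd a) (keptElt m) := by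
  unfold keptElt
  split_ifs
  · exact Commute.one_right _
  · exact pairProd_commute _ _

theorem coord_keptElt_mul {k m : ℕ} (hk : 1 ≤ k) {b : SinkAlgebra} (hb : coord k b = 0) :
    coord k (keptElt m * b) = 0 := by
  unfold keptElt
  split_ifs
  · rwa [one_mul]
  · rw [coord_ι_mul, pathVec_apply_eq_zero (by omega), hb, zero_smul, mul_zero, sub_zero]

theorem pathVec_top_odd (m : ℕ) : pathVec (2 * m + 1) 0 (m + 1) = 1 := by
  rw [pathVec, if_pos (by omega), show 2 * m + 1 + 1 - (m + 1) - 0 = m + 1 by omega, Nat.sub_zero,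
    Nat.choose_self, Nat.cast_one]

theorem pathVec_top_even (m : ℕ) : pathVec (2 * m + 2) 0 (m + 1) = m + 2 := by
  rw [pathVec, if_pos (by omega), show 2 * m + 2 + 1 - (m + 1) - 0 = m + 1 + 1 by omega,
    Nat.sub_zero, Nat.choose_succ_self_right]
  push_cast
  ring

theorem matchingCoeff_diagElt_one (m : ℕ) :
    matchingCoeff (m + 1) (diagElt (m + 1) 1 * removedElt (m + 1)) =
      matchingCoeff m (keptElt m) := by
  have hsq := ExteriorAlgebra.ι_sq_zero (R := ℤ) (pathVec (2 * m + 1) 0)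
  have hcomm := (ExteriorAlgebra.commute_ι_mul_ι (R := ℤ) (pathVec (2 * m + 2) 0)
    (pathVec (2 * m + 1) 0) (pathVec (2 * m + 1) 0)).eq
  have hP : ExteriorAlgebra.ι ℤ (pathVec (2 * m + 1) 0) * pairProd (2 * m + 2) =
      ExteriorAlgebra.ι ℤ (pathVec (2 * m + 1) 0) * pairProd (2 * m) := by
    rw [pairProd, pairProd, ← mul_assoc, mul_add, ← hcomm, mul_assoc, hsq, mul_zero, mul_one,
      add_zero, ← mul_assoc, mul_add, ← mul_assoc, hsq, zero_mul, mul_one, add_zero]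
  rw [removedElt_succ, diagElt, show 2 * (m + 1) - 1 = 2 * m + 1 by omega, matchingCoeff_apply,
    matchingCoeff_apply, show 2 * (m + 1) = 2 * m + 2 by omega, mul_assoc,
    ← (keptElt_commute_pairProd m _).eq, ← mul_assoc, hP, mul_assoc,
    (keptElt_commute_pairProd m _).eq, topCoeff_succ, coord_ι_mul, pathVec_top_odd, one_smul,
    coord_keptElt_mul (by omega) (coord_pairProd (by omega)), mul_zero, sub_zero]

theorem coord_top_pairProd (m : ℕ) :
    coord (m + 1) (pairProd (2 * m + 2)) =
      ExteriorAlgebra.ι ℤ (((m : ℤ) + 2) • pathVec (2 * m + 1) 0 - pathVec (2 * m + 2) 0 +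
        pathVec (2 * m) 0) * pairProd (2 * m) := by
  have hsq := ExteriorAlgebra.ι_sq_zero (R := ℤ) (pathVec (2 * m + 1) 0)
  have hP : coord (m + 1) (pairProd (2 * m)) = 0 := coord_pairProd (by omega)
  have hexp : pairProd (2 * m + 2) = pairProd (2 * m) +
      ExteriorAlgebra.ι ℤ (pathVec (2 * m + 1) 0) *
        (ExteriorAlgebra.ι ℤ (pathVec (2 * m) 0) * pairProd (2 * m)) +
      ExteriorAlgebra.ι ℤ (pathVec (2 * m + 2) 0) *
        (ExteriorAlgebra.ι ℤ (pathVec (2 * m + 1) 0) * pairProd (2 * m)) := by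
    rw [pairProd, pairProd]
    simp only [add_mul, mul_add, one_mul, mul_assoc]
    rw [← mul_assoc (ExteriorAlgebra.ι ℤ (pathVec (2 * m + 1) 0))
      (ExteriorAlgebra.ι ℤ (pathVec (2 * m + 1) 0)), hsq, zero_mul, mul_zero, add_zero]
    exact add_right_comm _ _ _
  rw [hexp]
  simp only [map_add, map_sub, map_smul, coord_ι_mul, hP, pathVec_top_odd, pathVec_top_even,
    pathVec_apply_eq_zero (show 2 * m + 1 < 2 * (m + 1) by omega), zero_smul, one_smul, mul_zero,
    sub_zero, zero_add, add_mul, sub_mul, smul_mul_assoc]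
  abel

theorem pathVec_sum_choose_tail (m : ℕ) :
    ((m : ℤ) + 2) • pathVec (2 * m + 1) 0 - pathVec (2 * m + 2) 0 =
      ∑ r ∈ range (m + 1), ((-1) ^ r * ((m + 2).choose (r + 2) : ℤ)) • pathVec (2 * m - r) 0 := by
  have h := pathVec_eq_sum_choose (m + 2) (a := 2 * m + 2) (h := 0) (by omega) (by omega)
  rw [pathVec_eq_zero (a := 2 * m + 2) (h := 0 + (m + 2)) (by omega), sum_range_succ',
    sum_range_succ', add_assoc] at h
  rw [← sub_eq_zero, ← neg_eq_zero, ← h, neg_sub, sub_eq_add_neg]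
  congr 1
  · refine sum_congr rfl fun r _ => ?_
    rw [show 2 * m + 2 - (r + 1 + 1) = 2 * m - r by omega, pow_add, pow_add]
    simp
  · simp only [zero_add, pow_one, pow_zero, Nat.choose_one_right, Nat.choose_zero_right,
      Nat.sub_zero, show 2 * m + 2 - 1 = 2 * m + 1 by omega]
    push_cast
    module

theorem coord_diagElt_mul_keptElt {k m j : ℕ} (hk : 2 * m + 1 < 2 * k) (w : ℕ → ℤ)
    {b b' : SinkAlgebra} (hb : coord k b = ExteriorAlgebra.ι ℤ w * b') :
    coord k (diagElt m j * keptElt m * b) =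
      ExteriorAlgebra.ι ℤ w * diagElt m j * keptElt m * b' := by
  unfold keptElt diagElt
  split_ifs
  · rw [mul_one, mul_one, coord_ι_mul, pathVec_apply_eq_zero (by omega), zero_smul, zero_sub, hb,
      ExteriorAlgebra.ι_mul_ι_comm, neg_mul, mul_assoc]
  · rw [mul_assoc, coord_ι_mul, coord_ι_mul, pathVec_apply_eq_zero (by omega),
      pathVec_apply_eq_zero (by omega), zero_smul, zero_smul, zero_sub, zero_sub, mul_neg, neg_neg,
      hb, mul_assoc (ExteriorAlgebra.ι ℤ w), ← (ExteriorAlgebra.commute_ι_mul_ι _ _ w).eq]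
    simp only [mul_assoc]

theorem matchingCoeff_diagElt_add_two (m j : ℕ) :
    matchingCoeff (m + 1) (diagElt (m + 1) (j + 2) * removedElt (m + 1)) =
      ∑ r ∈ range (m + 1), (-1) ^ r * ((m + 2).choose (r + 2) : ℤ) *
        matchingCoeff m (diagElt m r * diagElt m j * keptElt m) +
      matchingCoeff m (diagElt m 0 * diagElt m j * keptElt m) := by
  rw [removedElt_succ, diagElt_succ, matchingCoeff_apply, topCoeff_succ,
    show 2 * (m + 1) = 2 * m + 2 by omega,
    coord_diagElt_mul_keptElt (by omega) _ (coord_top_pairProd m), pathVec_sum_choose_tail,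
    ← matchingCoeff_apply]
  simp only [map_add, map_sum, map_smul, add_mul, sum_mul, smul_mul_assoc, smul_eq_mul]
  rfl

theorem Zpm_empty_pos (n : ℕ) : 0 < Zpm n ∅ := by
  induction n with
  | zero =>
    rw [← Int.natCast_pos, Zpm_empty, keptElt, if_neg (by omega), matchingCoeff_apply, pairProd,
      mul_one, topCoeff_zero_ι]
    exact Int.one_pos
  | succ m ih =>
    have h := matchingCoeff_keptElt (n := m + 1) (j := 1)
    rw [← Zpm_empty, matchingCoeff_diagElt_one, ← Zpm_empty,
      ← Zpm_pair Nat.zero_lt_one (by omega)] at h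
    omega

theorem diagElt_mul_comm (m i j : ℕ) : diagElt m i * diagElt m j = -(diagElt m j * diagElt m i) :=
  ExteriorAlgebra.ι_mul_ι_comm _ _

theorem ghat_mul {m i j : ℕ} (hi : i < 2 * m) (hj : j < 2 * m) :
    (Zpm m ∅ : ℚ) * ghat m i j = matchingCoeff m (diagElt m i * diagElt m j * keptElt m) := by
  have hZ : (Zpm m ∅ : ℚ) ≠ 0 := by exact_mod_cast (Zpm_empty_pos m).ne'
  rcases lt_trichotomy i j with h | rfl | h
  · rw [ghat, if_pos h, gfn, mul_div_cancel₀ _ hZ, ← Zpm_pair h hj, Int.cast_natCast]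
  · rw [ghat, if_neg (lt_irrefl _), if_neg (lt_irrefl _), diagElt, ExteriorAlgebra.ι_sq_zero,
      zero_mul, map_zero, mul_zero, Int.cast_zero]
  · rw [ghat, if_neg h.not_gt, if_pos h, gfn, mul_neg, mul_div_cancel₀ _ hZ, diagElt_mul_comm,
      neg_mul, map_neg, Int.cast_neg, ← Zpm_pair h hi, Int.cast_natCast]

theorem gb_eq {n j : ℕ} (hj : j < 2 * n) :
    gb n j = matchingCoeff n (diagElt n j * removedElt n) / Zpm n ∅ := by
  rw [gb, ← Zpm_bvertex hj, Int.cast_natCast]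

/-- For `n ≥ 1`: `g_n^b(0) = 1`, `g_n^b(1) = Z_{n−1}/Z_n`, and for `2 ≤ j ≤ 2n−1`:
`g_n^b(j) = (Z_{n−1}/Z_n)·(1 − g_{n−1}^b(j−2) + Σ_{r=0}^{n−1} (−1)^r·binom(n+1,r+2)·ĝ_{n−1}(r,j−2))`. -/
theorem gb_recurrence (n : ℕ) (hn : 1 ≤ n) :
    gb n 0 = 1 ∧
    gb n 1 = (Zpm (n-1) ∅ : ℚ) / (Zpm n ∅ : ℚ) ∧
    ∀ j : ℕ, 2 ≤ j → j ≤ 2*n - 1 →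
      gb n j = (Zpm (n-1) ∅ : ℚ) / (Zpm n ∅ : ℚ) *
        (1 - gb (n-1) (j-2) +
          ∑ r ∈ Finset.range n, (-1)^r * (Nat.choose (n+1) (r+2) : ℚ) * ghat (n-1) r (j-2)) := by
  obtain ⟨m, rfl⟩ : ∃ m, n = m + 1 := ⟨n - 1, by omega⟩
  have hZ (k : ℕ) : (Zpm k ∅ : ℚ) ≠ 0 := by exact_mod_cast (Zpm_empty_pos k).ne'
  rw [Nat.add_sub_cancel]
  refine ⟨?_, ?_, fun j hj2 hj => ?_⟩
  · have h := matchingCoeff_keptElt (n := m + 1) (j := 0)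
    rw [diagElt, ExteriorAlgebra.ι_sq_zero, zero_mul, map_zero, add_zero, ← diagElt,
      ← Zpm_empty] at h
    rw [gb_eq (by omega), ← h, Int.cast_natCast, div_self (hZ _)]
  · rw [gb_eq (by omega), matchingCoeff_diagElt_one, ← Zpm_empty, Int.cast_natCast]
  · obtain ⟨i, rfl⟩ : ∃ i, j = i + 2 := ⟨j - 2, by omega⟩
    have h := matchingCoeff_keptElt (n := m) (j := i)
    rw [Nat.add_sub_cancel, gb_eq (by omega), gb_eq (by omega), matchingCoeff_diagElt_add_two,
      div_mul_eq_mul_div, mul_add, mul_sub, mul_div_cancel₀ _ (hZ m), mul_sum, mul_one]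
    congr 1
    rw [← Zpm_empty] at h
    have h' : (matchingCoeff m (diagElt m 0 * diagElt m i * keptElt m) : ℚ) =
        Zpm m ∅ - matchingCoeff m (diagElt m i * removedElt m) := by
      rw [eq_sub_iff_add_eq, add_comm]
      exact_mod_cast h.symm
    push_cast
    rw [h', add_comm]
    congr 1
    refine sum_congr rfl fun r hr => ?_
    rw [← ghat_mul (by rw [mem_range] at hr; omega) (by omega)]
    ring
end

section
/- For every integer n ≥ 0: if n is even then Σ_{j=0}^{2n} Z_n^{{(j,j), b_n}} = (n+1)·Z_n, and if n is odd then 2·Σ_{j=0}^{2n} Z_n^{{(j,j), b_n}} = (2n+1)·Z_n. (Here, when n is odd and j = 2n, the set {(2n,2n), b_n} is the singleton {b_n}, and the corresponding count of perfect matchings is 0 since an odd number of vertices remains.) Equivalently, Σ_{j=0}^{2n} Z_n^{{(j,j), b_n}}/Z_n equals n+1 for n even and n+1/2 for n odd. -/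
open Finset

/-! ### Perfect matchings as involutions -/

section Involutions

variable {α : Type*} {G : SimpleGraph α} {S : Set α} {m : Equiv.Perm α}

/-- The involution `m` sends each vertex of `S` to its partner in a perfect matching of the
subgraph of `G` induced on `S`, and fixes everything outside `S`. -/
def IsPM (G : SimpleGraph α) (S : Set α) (m : Equiv.Perm α) : Prop :=
  (∀ x, m (m x) = x) ∧ (∀ x ∈ S, G.Adj x (m x)) ∧ ∀ x ∉ S, m x = x

lemma IsPM.apply_mem (h : IsPM G S m) {x : α} (hx : x ∈ S) : m x ∈ S := by
  by_contra hm
  have h1 := h.2.2 _ hm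
  rw [h.1] at h1
  exact (h.2.1 x hx).ne h1

lemma finite_isPM (G : SimpleGraph α) (hS : S.Finite) : {m | IsPM G S m}.Finite := by
  classical
  have := hS.to_subtype
  have hf : Finite {f : Equiv.Perm α // ∀ a, ¬ a ∈ S → f a = a} :=
    Finite.of_equiv _ (Equiv.Perm.subtypeEquivSubtypePerm (fun a => a ∈ S))
  exact Set.Finite.subset (s := {f : Equiv.Perm α | ∀ a, ¬ a ∈ S → f a = a}) hf
    fun m hm => hm.2.2

/-- Involutions satisfying `IsPM` correspond to perfect matchings of the induced subgraph. -/
lemma card_isPM (G : SimpleGraph α) (S : Set α) :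
    Nat.card {m : Equiv.Perm α // IsPM G S m}
      = Nat.card {M : (G.induce S).Subgraph // M.IsPerfectMatching} := by
  classical
  let F : {m : Equiv.Perm α // IsPM G S m} →
      {M : (G.induce S).Subgraph // M.IsPerfectMatching} := fun m =>
    ⟨{ verts := Set.univ
       Adj := fun x y => m.1 x = y
       adj_sub := by
         intro x y hxy
         have := m.2.2.1 x x.2
         rw [hxy] at this
         exact this
       edge_vert := fun _ => Set.mem_univ _
       symm := ⟨by
         intro x y hxy
         rw [← hxy, m.2.1]⟩ }, by
      rw [SimpleGraph.Subgraph.isPerfectMatching_iff]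
      intro x
      exact ⟨⟨m.1 x, m.2.apply_mem x.2⟩, rfl, fun y hy => Subtype.ext (Eq.symm hy)⟩⟩
  refine Nat.card_eq_of_bijective F ⟨?_, ?_⟩
  · intro m m' h
    have hadj : ∀ x y : S, m.1 x = y ↔ m'.1 x = y := by
      intro x y
      have h1 := congrArg (fun M => M.1.Adj x y) h
      exact iff_of_eq h1
    apply Subtype.ext
    ext x
    by_cases hx : x ∈ S
    · exact ((hadj ⟨x, hx⟩ ⟨m.1 x, m.2.apply_mem hx⟩).1 rfl).symm
    · rw [m.2.2.2 x hx, m'.2.2.2 x hx]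
  · rintro ⟨M, hM⟩
    have hM' := SimpleGraph.Subgraph.isPerfectMatching_iff.1 hM
    choose p hp hpu using hM'
    let f : α → α := fun x => if hx : x ∈ S then p ⟨x, hx⟩ else x
    have hf : Function.Involutive f := by
      intro x
      by_cases hx : x ∈ S
      · have h1 : f x = p ⟨x, hx⟩ := dif_pos hx
        rw [h1]
        have h2 : f (p ⟨x, hx⟩) = p (p ⟨x, hx⟩) := dif_pos (p ⟨x, hx⟩).2
        rw [h2, ← hpu (p ⟨x, hx⟩) ⟨x, hx⟩ (hp ⟨x, hx⟩).symm]
      · have h1 : f x = x := dif_neg hx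
        rw [h1, h1]
    refine ⟨⟨hf.toPerm, hf, fun x hx => ?_, fun x hx => dif_neg hx⟩, ?_⟩
    · have h1 : f x = p ⟨x, hx⟩ := dif_pos hx
      change G.Adj x (f x)
      rw [h1]
      exact M.adj_sub (hp ⟨x, hx⟩)
    · apply Subtype.ext
      ext x y
      · simp [F, hM.2 x]
      · change f x = y ↔ M.Adj x y
        have h1 : f x = p x := dif_pos x.2
        rw [h1]
        exact ⟨fun h => Subtype.ext h ▸ hp x, fun h => congrArg Subtype.val (hpu x y h).symm⟩

variable [DecidableEq α] {V : Set α} {b u v w : α}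

/-- Moving the monomer `u` across the vertex `v`, whose former partner becomes the monomer. -/
lemma IsPM.hop (h : IsPM G (V \ {u, b}) m) (hu : u ∈ V) (hub : u ≠ b) (hv : v ∈ V) (hvb : v ≠ b)
    (hvw : m v = w) (huv : G.Adj v u) :
    IsPM G (V \ {w, b}) (Equiv.swap u w * m * Equiv.swap u w) := by
  obtain ⟨h1, h2, h3⟩ := h
  have hvS : v ∈ V \ {u, b} := by simp [hv, hvb, huv.ne]
  have hwS : w ∈ V \ {u, b} := hvw ▸ IsPM.apply_mem ⟨h1, h2, h3⟩ hvS
  have hmw : m w = v := by rw [← hvw, h1]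
  have hmu : m u = u := h3 u (by simp)
  have hvw' : v ≠ w := hvw ▸ (h2 v hvS).ne
  have hne := huv.ne
  have hinj := m.injective
  simp only [Set.mem_sdiff, Set.mem_insert_iff, Set.mem_singleton_iff, not_or] at *
  refine ⟨fun x => by simp [h1], fun x hx => ?_, fun x hx => ?_⟩ <;>
    simp only [Set.mem_sdiff, Set.mem_insert_iff, Set.mem_singleton_iff, not_or] at hx
  · simp only [Equiv.Perm.mul_apply]
    by_cases hxu : x = u
    · rw [hxu, Equiv.swap_apply_left, hmw, Equiv.swap_apply_of_ne_of_ne hne hvw']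
      exact huv.symm
    · rw [Equiv.swap_apply_of_ne_of_ne hxu hx.2.1]
      by_cases hxv : x = v
      · rw [hxv, hvw, Equiv.swap_apply_right]
        exact huv
      · rw [Equiv.swap_apply_of_ne_of_ne]
        · exact h2 x ⟨hx.1, hxu, hx.2.2⟩
        · intro h
          exact hxu (hinj (h.trans hmu.symm))
        · intro h
          exact hxv (hinj (h.trans hvw.symm))
  · simp only [Equiv.Perm.mul_apply]
    by_cases hxw : x = w
    · rw [hxw, Equiv.swap_apply_right, hmu, Equiv.swap_apply_left]
    · have hxu : x ≠ u := by
        rintro rfl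
        exact hx ⟨hu, hxw, hub⟩
      rw [Equiv.swap_apply_of_ne_of_ne hxu hxw, h3 x (by tauto),
        Equiv.swap_apply_of_ne_of_ne hxu hxw]

/-- Deleting the dimer `{b, u}`. -/
lemma IsPM.remove (h : IsPM G V m) (hb : m b = u) :
    IsPM G (V \ {u, b}) (Equiv.swap u b * m) := by
  obtain ⟨h1, h2, h3⟩ := h
  have hmu : m u = b := by rw [← hb, h1]
  have hinj := m.injective
  simp only [IsPM, Set.mem_sdiff, Set.mem_insert_iff, Set.mem_singleton_iff, not_or,
    Equiv.Perm.mul_apply]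
  have key : ∀ x, x ≠ u → x ≠ b → Equiv.swap u b (m x) = m x := fun x hxu hxb =>
    Equiv.swap_apply_of_ne_of_ne (fun h => hxb (hinj (h.trans hb.symm)))
      (fun h => hxu (hinj (h.trans hmu.symm)))
  have keyu : Equiv.swap u b (m u) = u := by rw [hmu, Equiv.swap_apply_right]
  have keyb : Equiv.swap u b (m b) = b := by rw [hb, Equiv.swap_apply_left]
  refine ⟨fun x => ?_, fun x hx => ?_, fun x hx => ?_⟩
  · by_cases hxu : x = u
    · rw [hxu, keyu, keyu]
    by_cases hxb : x = b
    · rw [hxb, keyb, keyb]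
    rw [key x hxu hxb, h1, Equiv.swap_apply_of_ne_of_ne hxu hxb]
  · rw [key x hx.2.1 hx.2.2]
    exact h2 x hx.1
  · by_cases hxu : x = u
    · rw [hxu, keyu]
    by_cases hxb : x = b
    · rw [hxb, keyb]
    rw [key x hxu hxb, h3 x (by tauto)]

/-- Adding the dimer `{b, u}`. -/
lemma IsPM.insert (h : IsPM G (V \ {u, b}) m) (hu : u ∈ V) (hb : b ∈ V) (hbu : G.Adj b u) :
    IsPM G V (Equiv.swap u b * m) := by
  obtain ⟨h1, h2, h3⟩ := h
  have hmu : m u = u := h3 u (by simp)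
  have hmb : m b = b := h3 b (by simp)
  have hinj := m.injective
  simp only [IsPM, Set.mem_sdiff, Set.mem_insert_iff, Set.mem_singleton_iff, not_or,
    Equiv.Perm.mul_apply] at *
  have key : ∀ x, x ≠ u → x ≠ b → Equiv.swap u b (m x) = m x := fun x hxu hxb =>
    Equiv.swap_apply_of_ne_of_ne (fun h => hxu (hinj (h.trans hmu.symm)))
      (fun h => hxb (hinj (h.trans hmb.symm)))
  have keyu : Equiv.swap u b (m u) = b := by rw [hmu, Equiv.swap_apply_left]
  have keyb : Equiv.swap u b (m b) = u := by rw [hmb, Equiv.swap_apply_right]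
  refine ⟨fun x => ?_, fun x hx => ?_, fun x hx => ?_⟩
  · by_cases hxu : x = u
    · rw [hxu, keyu, keyb]
    by_cases hxb : x = b
    · rw [hxb, keyb, keyu]
    rw [key x hxu hxb, h1, Equiv.swap_apply_of_ne_of_ne hxu hxb]
  · by_cases hxu : x = u
    · rw [hxu, keyu]
      exact hbu.symm
    by_cases hxb : x = b
    · rw [hxb, keyb]
      exact hbu
    rw [key x hxu hxb]
    exact h2 x ⟨hx, hxu, hxb⟩
  · have hxu : x ≠ u := fun h => hx (h ▸ hu)
    have hxb : x ≠ b := fun h => hx (h ▸ hb)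
    rw [key x hxu hxb, h3 x (by tauto)]

end Involutions

/-! ### Matchings of `G_n` with monomers at `u` and `b_n` -/

lemma finite_Vset (n : ℕ) : (Vset n).Finite := by
  refine (Set.finite_Icc ((0 : ℤ), (0 : ℤ)) (2 * (n : ℤ), 2 * (n : ℤ) + 1)).subset ?_
  rintro ⟨x, y⟩ ⟨h1, h2, h3, h4, -⟩
  simp only at h1 h2 h3 h4
  exact ⟨⟨h1, by simp only; omega⟩, ⟨h2, h4⟩⟩

lemma finite_monomer (n : ℕ) (u : ℤ × ℤ) :
    {m | u ∈ Vset n ∧ u ≠ bvertex n ∧ IsPM (Gph n) (Vset n \ {u, bvertex n}) m}.Finite :=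
  (finite_isPM (Gph n) (finite_Vset n).sdiff).subset fun _ hm => hm.2.2

/-- The perfect matchings of `G_n` with `u` and `b_n` removed; there are none by convention
when `u` is not a vertex of `G_n` or equals `b_n`. -/
noncomputable def monomerPM (n : ℕ) (u : ℤ × ℤ) : Finset (Equiv.Perm (ℤ × ℤ)) :=
  (finite_monomer n u).toFinset

lemma mem_monomerPM {n : ℕ} {u : ℤ × ℤ} {m : Equiv.Perm (ℤ × ℤ)} :
    m ∈ monomerPM n u ↔
      u ∈ Vset n ∧ u ≠ bvertex n ∧ IsPM (Gph n) (Vset n \ {u, bvertex n}) m := by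
  simp [monomerPM]

lemma monomerPM_eq_empty {n : ℕ} {u : ℤ × ℤ} (h : u ∈ Vset n → u = bvertex n) :
    monomerPM n u = ∅ := by
  ext m
  simp only [mem_monomerPM, Finset.notMem_empty, iff_false]
  tauto

lemma card_monomerPM {n : ℕ} {u : ℤ × ℤ} (hu : u ∈ Vset n) (hb : u ≠ bvertex n) :
    #(monomerPM n u) = Zpm n {u, bvertex n} := by
  rw [Zpm, ← card_isPM]
  exact (Nat.subtype_card _ fun m => by simp [mem_monomerPM, hu, hb]).symm

section Hops

variable {n : ℕ} {u v w : ℤ × ℤ} {m : Equiv.Perm (ℤ × ℤ)}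

lemma apply_mem_of_mem_monomerPM (hm : m ∈ monomerPM n u) (hv : v ∈ Vset n) (hvb : v ≠ bvertex n)
    (hvu : v ≠ u) : m v ∈ Vset n ∧ m v ≠ u ∧ m v ≠ bvertex n ∧ (Gph n).Adj v (m v) := by
  have hm' := (mem_monomerPM.1 hm).2.2
  have hvS : v ∈ Vset n \ {u, bvertex n} := by simp [hv, hvb, hvu]
  have h := hm'.apply_mem hvS
  simp only [Set.mem_sdiff, Set.mem_insert_iff, Set.mem_singleton_iff, not_or] at h
  exact ⟨h.1, h.2.1, h.2.2, hm'.2.1 v hvS⟩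

lemma apply_apply_of_mem_monomerPM (hm : m ∈ monomerPM n u) (x : ℤ × ℤ) : m (m x) = x :=
  (mem_monomerPM.1 hm).2.2.1 x

lemma apply_eq_comm_of_mem_monomerPM {x y : ℤ × ℤ} (hm : m ∈ monomerPM n u) :
    m x = y ↔ m y = x :=
  ⟨fun h => h ▸ apply_apply_of_mem_monomerPM hm _, fun h => h ▸ apply_apply_of_mem_monomerPM hm _⟩

lemma apply_self_of_mem_monomerPM (hm : m ∈ monomerPM n u) : m u = u :=
  (mem_monomerPM.1 hm).2.2.2.2 u (by simp)

lemma hop_mem_monomerPM (hv : v ∈ Vset n) (hvb : v ≠ bvertex n)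
    (huv : u ∈ Vset n → u ≠ bvertex n → (Gph n).Adj v u)
    (hm : m ∈ monomerPM n u) (hvw : m v = w) :
    Equiv.swap u w * m * Equiv.swap u w ∈ monomerPM n w ∧
      (Equiv.swap u w * m * Equiv.swap u w) v = u := by
  obtain ⟨hu, hub, hPM⟩ := mem_monomerPM.1 hm
  have hadj := huv hu hub
  have h := apply_mem_of_mem_monomerPM hm hv hvb hadj.ne
  rw [hvw] at h
  refine ⟨mem_monomerPM.2 ⟨h.1, h.2.2.1, hPM.hop hu hub hv hvb hvw hadj⟩, ?_⟩
  rw [Equiv.Perm.mul_apply, Equiv.Perm.mul_apply,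
    Equiv.swap_apply_of_ne_of_ne hadj.ne h.2.2.2.ne, hvw, Equiv.swap_apply_right]

lemma hop_apply_of_ne {x : ℤ × ℤ} (hm : m ∈ monomerPM n u) (hvw : m v = w) (hxu : x ≠ u)
    (hxv : x ≠ v) (hxw : x ≠ w) : (Equiv.swap u w * m * Equiv.swap u w) x = m x := by
  rw [Equiv.Perm.mul_apply, Equiv.Perm.mul_apply, Equiv.swap_apply_of_ne_of_ne hxu hxw,
    Equiv.swap_apply_of_ne_of_ne
      (fun h => hxu (m.injective (h.trans (apply_self_of_mem_monomerPM hm).symm)))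
      (fun h => hxv (m.injective (h.trans hvw.symm)))]

/-- Exchanging the monomer `u` with the partner `w` of `v`, in weighted sums. -/
lemma sum_hop (φ ψ : Equiv.Perm (ℤ × ℤ) → ℤ) (hv : v ∈ Vset n) (hvb : v ≠ bvertex n)
    (huv : u ∈ Vset n → u ≠ bvertex n → (Gph n).Adj v u)
    (hwv : w ∈ Vset n → w ≠ bvertex n → (Gph n).Adj v w)
    (h : ∀ m ∈ monomerPM n u, m v = w → φ m = ψ (Equiv.swap u w * m * Equiv.swap u w)) :
    ∑ m ∈ monomerPM n u with m v = w, φ m = ∑ m ∈ monomerPM n w with m v = u, ψ m := by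
  have hinv : ∀ m : Equiv.Perm (ℤ × ℤ), Equiv.swap u w *
      (Equiv.swap u w * m * Equiv.swap u w) * Equiv.swap u w = m := by
    intro m
    ext x <;> simp
  refine Finset.sum_nbij' (fun m => Equiv.swap u w * m * Equiv.swap u w)
    (fun m => Equiv.swap u w * m * Equiv.swap u w) ?_ ?_ (fun m _ => hinv m) (fun m _ => hinv m) ?_
  · intro m hm
    rw [Finset.mem_filter] at hm ⊢
    exact hop_mem_monomerPM hv hvb huv hm.1 hm.2
  · intro m hm
    rw [Finset.mem_filter] at hm ⊢
    rw [Equiv.swap_comm u w]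
    exact hop_mem_monomerPM hv hvb hwv hm.1 hm.2
  · intro m hm
    rw [Finset.mem_filter] at hm
    exact h m hm.1 hm.2

lemma card_hop (hv : v ∈ Vset n) (hvb : v ≠ bvertex n)
    (huv : u ∈ Vset n → u ≠ bvertex n → (Gph n).Adj v u)
    (hwv : w ∈ Vset n → w ≠ bvertex n → (Gph n).Adj v w) :
    (#{m ∈ monomerPM n u | m v = w} : ℤ) = #{m ∈ monomerPM n w | m v = u} := by
  simpa using sum_hop (fun _ => 1) (fun _ => 1) hv hvb huv hwv fun _ _ _ => rfl

lemma sum_eq_of_apply_mem (φ : Equiv.Perm (ℤ × ℤ) → ℤ) {w₁ w₂ : ℤ × ℤ} (h12 : w₁ ≠ w₂)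
    (h : ∀ m ∈ monomerPM n u, m v = w₁ ∨ m v = w₂) :
    ∑ m ∈ monomerPM n u, φ m = ∑ m ∈ monomerPM n u with m v = w₁, φ m
      + ∑ m ∈ monomerPM n u with m v = w₂, φ m := by
  rw [← Finset.sum_fiberwise_of_maps_to (g := fun m => m v) (t := {w₁, w₂})
    (by simpa using h), Finset.sum_pair h12]

lemma sum_eq_of_apply_mem_triple (φ : Equiv.Perm (ℤ × ℤ) → ℤ) {w₁ w₂ w₃ : ℤ × ℤ}
    (h12 : w₁ ≠ w₂) (h13 : w₁ ≠ w₃) (h23 : w₂ ≠ w₃)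
    (h : ∀ m ∈ monomerPM n u, m v = w₁ ∨ m v = w₂ ∨ m v = w₃) :
    ∑ m ∈ monomerPM n u, φ m = ∑ m ∈ monomerPM n u with m v = w₁, φ m
      + ∑ m ∈ monomerPM n u with m v = w₂, φ m + ∑ m ∈ monomerPM n u with m v = w₃, φ m := by
  rw [← Finset.sum_fiberwise_of_maps_to (g := fun m => m v) (t := {w₁, w₂, w₃})
    (by simpa using h), Finset.sum_insert (by simp [h12, h13]), Finset.sum_pair h23, add_assoc]

end Hops

/-! ### Adjacency in `G_n` -/

section Adjacency

variable {n : ℕ} {j : ℤ} {w : ℤ × ℤ}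

lemma mem_Vset {x y : ℤ} : (x, y) ∈ Vset n ↔ 0 ≤ x ∧ x ≤ 2 * (n : ℤ) ∧ x ≤ y ∧
    y ≤ 2 * (n : ℤ) + 1 ∧ ¬(n % 2 = 1 ∧ x = 2 * (n : ℤ) ∧ y = 2 * (n : ℤ) + 1) := Iff.rfl

lemma adj_diag_s13 (h : (Gph n).Adj (j, j) w) :
    w = (j, j + 1) ∨ w = (j - 1, j) ∨ w = (j + 1, j + 1) ∨ w = (j - 1, j - 1) := by
  obtain ⟨x, y⟩ := w
  simp only [Gph, edgeRel, Int.odd_iff, Prod.mk.injEq] at h ⊢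
  omega

lemma adj_second (h : (Gph n).Adj (j, j + 2) w) :
    w = (j, j + 3) ∨ w = (j, j + 1) ∨ w = (j - 1, j + 2) := by
  obtain ⟨x, y⟩ := w
  simp only [Gph, edgeRel, Int.odd_iff, Prod.mk.injEq] at h ⊢
  omega

lemma adj_first (h : (Gph n).Adj (j, j + 1) w) :
    w = (j, j) ∨ w = (j, j + 2) ∨ w = (j + 1, j + 1) := by
  obtain ⟨x, y⟩ := w
  simp only [Gph, edgeRel, Int.odd_iff, Prod.mk.injEq] at h ⊢
  omega

lemma adj_diag_up (hv : (j, j) ∈ Vset n) (hw : (j, j + 1) ∈ Vset n) :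
    (Gph n).Adj (j, j) (j, j + 1) := by
  simp only [mem_Vset, Gph, edgeRel, true_and] at *
  omega

lemma adj_diag_left (hv : (j, j) ∈ Vset n) (hw : (j - 1, j) ∈ Vset n) :
    (Gph n).Adj (j, j) (j - 1, j) := by
  simp only [mem_Vset, Gph, edgeRel, Int.odd_iff, true_and] at *
  omega

lemma adj_diag_succ (hv : (j, j) ∈ Vset n) (hw : (j + 1, j + 1) ∈ Vset n) :
    (Gph n).Adj (j, j) (j + 1, j + 1) := by
  simp only [mem_Vset, Gph, edgeRel, true_and] at *
  omega

lemma adj_diag_pred (hv : (j, j) ∈ Vset n) (hw : (j - 1, j - 1) ∈ Vset n) :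
    (Gph n).Adj (j, j) (j - 1, j - 1) := by
  simp only [mem_Vset, Gph, edgeRel, true_and] at *
  omega

lemma adj_second_up (hv : (j, j + 2) ∈ Vset n) (hw : (j, j + 3) ∈ Vset n) :
    (Gph n).Adj (j, j + 2) (j, j + 3) := by
  simp only [mem_Vset, Gph, edgeRel, true_and] at *
  omega

lemma adj_second_down (hv : (j, j + 2) ∈ Vset n) :
    (Gph n).Adj (j, j + 2) (j, j + 1) := by
  simp only [mem_Vset, Gph, edgeRel, true_and] at *
  omega

lemma adj_second_left (hv : (j, j + 2) ∈ Vset n) (hw : (j - 1, j + 2) ∈ Vset n) :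
    (Gph n).Adj (j, j + 2) (j - 1, j + 2) := by
  simp only [mem_Vset, Gph, edgeRel, Int.odd_iff, true_and] at *
  omega

end Adjacency

/-! ### Signed counts -/

/-- The sign is `-1` when the diagonal vertex `(j+1,j+1)` is matched into column `j`. -/
def leftSign (j : ℤ) (m : Equiv.Perm (ℤ × ℤ)) : ℤ :=
  if m (j + 1, j + 1) = (j, j) ∨ m (j + 1, j + 1) = (j, j + 1) then -1 else 1

/-- Signed number of matchings with a monomer at `(j,j+1)`. -/
noncomputable def firstSum (n : ℕ) (j : ℤ) : ℤ :=
  ∑ m ∈ monomerPM n (j, j + 1), leftSign j m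

/-- Signed number of matchings with a monomer at `(j,j+3)`. -/
noncomputable def thirdSum (n : ℕ) (j : ℤ) : ℤ :=
  ∑ m ∈ monomerPM n (j, j + 3), leftSign j m

/-- Number of matchings with a monomer at `(j,j)`. -/
noncomputable def diagSum (n : ℕ) (j : ℤ) : ℤ := #(monomerPM n (j, j))

section DiagRelation

variable {n : ℕ} {j : ℤ}

lemma apply_diag_of_mem_monomerPM {u : ℤ × ℤ} {m : Equiv.Perm (ℤ × ℤ)} (hv : (j, j) ∈ Vset n)
    (hvb : (j, j) ≠ bvertex n) (hu : u ≠ (j, j)) (hm : m ∈ monomerPM n u) :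
    m (j, j) ≠ u ∧ (m (j, j) = (j, j + 1) ∨ m (j, j) = (j - 1, j) ∨ m (j, j) = (j + 1, j + 1) ∨
      m (j, j) = (j - 1, j - 1)) :=
  have h := apply_mem_of_mem_monomerPM hm hv hvb hu.symm
  ⟨h.2.1, adj_diag_s13 h.2.2.2⟩

lemma firstSum_eq (hv : (j, j) ∈ Vset n) (hvb : (j, j) ≠ bvertex n) :
    firstSum n j = #{m ∈ monomerPM n (j, j + 1) | m (j, j) = (j - 1, j)}
      - #{m ∈ monomerPM n (j, j + 1) | m (j, j) = (j + 1, j + 1)}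
      + #{m ∈ monomerPM n (j, j + 1) | m (j, j) = (j - 1, j - 1)} := by
  have hs : ∀ m ∈ monomerPM n (j, j + 1),
      leftSign j m = if m (j, j) = (j + 1, j + 1) then -1 else 1 := by
    intro m hm
    have h1 : m (j + 1, j + 1) = (j, j) ↔ m (j, j) = (j + 1, j + 1) :=
      apply_eq_comm_of_mem_monomerPM hm
    have h2 : m (j + 1, j + 1) ≠ (j, j + 1) := fun h => by
      have := m.injective (h.trans (apply_self_of_mem_monomerPM hm).symm)
      simp at this
    simp only [leftSign, h1, h2, or_false]
  rw [firstSum, sum_eq_of_apply_mem_triple (v := (j, j)) (w₁ := (j - 1, j))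
    (w₂ := (j + 1, j + 1)) (w₃ := (j - 1, j - 1)) _ (by simp) (by simp; omega) (by simp; omega)
    fun m hm => by
      have := apply_diag_of_mem_monomerPM hv hvb (by simp) hm
      grind]
  have e : ∀ w : ℤ × ℤ, ∑ m ∈ monomerPM n (j, j + 1) with m (j, j) = w, leftSign j m
      = (if w = (j + 1, j + 1) then -1 else 1) *
        (#{m ∈ monomerPM n (j, j + 1) | m (j, j) = w} : ℤ) := by
    intro w
    rw [Finset.sum_congr rfl (g := fun _ => if w = (j + 1, j + 1) then (-1 : ℤ) else 1)]
    · rw [Finset.sum_const, nsmul_eq_mul, mul_comm]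
    · intro m hm
      rw [Finset.mem_filter] at hm
      rw [hs m hm.1, hm.2]
  rw [e, e, e, if_neg (by simp), if_pos rfl, if_neg (by simp; omega)]
  ring

lemma firstSum_pred_eq (hv : (j, j) ∈ Vset n) (hvb : (j, j) ≠ bvertex n) :
    firstSum n (j - 1) = #{m ∈ monomerPM n (j - 1, j) | m (j, j) = (j, j + 1)}
      + #{m ∈ monomerPM n (j - 1, j) | m (j, j) = (j + 1, j + 1)}
      - #{m ∈ monomerPM n (j - 1, j) | m (j, j) = (j - 1, j - 1)} := by
  have hs : ∀ m ∈ monomerPM n (j - 1, j),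
      leftSign (j - 1) m = if m (j, j) = (j - 1, j - 1) then -1 else 1 := by
    intro m hm
    have h2 : m (j, j) ≠ (j - 1, j) := (apply_diag_of_mem_monomerPM hv hvb (by simp) hm).1
    simp only [leftSign, sub_add_cancel, h2, or_false]
  rw [firstSum, sub_add_cancel, sum_eq_of_apply_mem_triple (v := (j, j)) (w₁ := (j, j + 1))
    (w₂ := (j + 1, j + 1)) (w₃ := (j - 1, j - 1)) _ (by simp) (by simp; omega) (by simp; omega)
    fun m hm => by
      have := apply_diag_of_mem_monomerPM hv hvb (by simp) hm
      grind]
  have e : ∀ w : ℤ × ℤ, ∑ m ∈ monomerPM n (j - 1, j) with m (j, j) = w, leftSign (j - 1) m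
      = (if w = (j - 1, j - 1) then -1 else 1) *
        (#{m ∈ monomerPM n (j - 1, j) | m (j, j) = w} : ℤ) := by
    intro w
    rw [Finset.sum_congr rfl (g := fun _ => if w = (j - 1, j - 1) then (-1 : ℤ) else 1)]
    · rw [Finset.sum_const, nsmul_eq_mul, mul_comm]
    · intro m hm
      rw [Finset.mem_filter] at hm
      rw [hs m hm.1, hm.2]
  rw [e, e, e, if_neg (by simp; omega), if_neg (by simp; omega), if_pos rfl]
  ring

lemma diagSum_succ_eq (hv : (j, j) ∈ Vset n) (hvb : (j, j) ≠ bvertex n) :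
    diagSum n (j + 1) = #{m ∈ monomerPM n (j + 1, j + 1) | m (j, j) = (j, j + 1)}
      + #{m ∈ monomerPM n (j + 1, j + 1) | m (j, j) = (j - 1, j)}
      + #{m ∈ monomerPM n (j + 1, j + 1) | m (j, j) = (j - 1, j - 1)} := by
  have h := sum_eq_of_apply_mem_triple (n := n) (u := (j + 1, j + 1)) (v := (j, j))
    (w₁ := (j, j + 1)) (w₂ := (j - 1, j)) (w₃ := (j - 1, j - 1)) (fun _ => 1)
    (by simp) (by simp; omega) (by simp; omega) fun m hm => by
      have := apply_diag_of_mem_monomerPM hv hvb (by simp) hm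
      grind
  simpa only [diagSum, Finset.sum_const, nsmul_eq_mul, mul_one] using h

lemma diagSum_pred_eq (hv : (j, j) ∈ Vset n) (hvb : (j, j) ≠ bvertex n) :
    diagSum n (j - 1) = #{m ∈ monomerPM n (j - 1, j - 1) | m (j, j) = (j, j + 1)}
      + #{m ∈ monomerPM n (j - 1, j - 1) | m (j, j) = (j - 1, j)}
      + #{m ∈ monomerPM n (j - 1, j - 1) | m (j, j) = (j + 1, j + 1)} := by
  have h := sum_eq_of_apply_mem_triple (n := n) (u := (j - 1, j - 1)) (v := (j, j))
    (w₁ := (j, j + 1)) (w₂ := (j - 1, j)) (w₃ := (j + 1, j + 1)) (fun _ => 1)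
    (by simp) (by simp) (by simp) fun m hm => by
      have := apply_diag_of_mem_monomerPM hv hvb (by simp) hm
      grind
  simpa only [diagSum, Finset.sum_const, nsmul_eq_mul, mul_one] using h

/-- The monomer relation at the diagonal vertex `(j,j)`. -/
lemma diag_relation (hv : (j, j) ∈ Vset n) (hvb : (j, j) ≠ bvertex n) :
    firstSum n j - firstSum n (j - 1) + diagSum n (j + 1) - diagSum n (j - 1) = 0 := by
  have hU := fun hw (_ : (j, j + 1) ≠ bvertex n) => adj_diag_up hv hw
  have hL := fun hw (_ : (j - 1, j) ≠ bvertex n) => adj_diag_left hv hw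
  have hP := fun hw (_ : (j + 1, j + 1) ≠ bvertex n) => adj_diag_succ hv hw
  have hM := fun hw (_ : (j - 1, j - 1) ≠ bvertex n) => adj_diag_pred hv hw
  rw [firstSum_eq hv hvb, firstSum_pred_eq hv hvb, diagSum_succ_eq hv hvb, diagSum_pred_eq hv hvb,
    card_hop hv hvb hU hL, card_hop hv hvb hU hP, card_hop hv hvb hU hM,
    card_hop hv hvb hL hP, card_hop hv hvb hL hM, card_hop hv hvb hP hM]
  ring

end DiagRelation

section SecondRelation

variable {n : ℕ} {j : ℤ}

lemma second_ne_bvertex : (j, j + 2) ≠ bvertex n := by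
  simp only [bvertex, ne_eq, Prod.mk.injEq]
  omega

lemma sum_third_down (hv : (j, j + 2) ∈ Vset n) :
    ∑ m ∈ monomerPM n (j, j + 3) with m (j, j + 2) = (j, j + 1), leftSign j m
      = ∑ m ∈ monomerPM n (j, j + 1) with m (j, j + 2) = (j, j + 3), leftSign j m := by
  refine sum_hop _ _ hv second_ne_bvertex (fun hw _ => adj_second_up hv hw)
    (fun _ _ => adj_second_down hv) fun m hm hvw => ?_
  rw [leftSign, leftSign, hop_apply_of_ne hm hvw (by simp) (by simp) (by simp)]

lemma sum_first_left (hv : (j, j + 2) ∈ Vset n) :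
    ∑ m ∈ monomerPM n (j, j + 1) with m (j, j + 2) = (j - 1, j + 2), leftSign j m
      = ∑ m ∈ monomerPM n (j - 1, j + 2) with m (j, j + 2) = (j, j + 1), -leftSign (j - 1) m := by
  refine sum_hop _ _ hv second_ne_bvertex (fun _ _ => adj_second_down hv)
    (fun hw _ => adj_second_left hv hw) fun m hm hvw => ?_
  rw [leftSign, leftSign, sub_add_cancel, hop_apply_of_ne hm hvw (by simp) (by simp) (by simp)]
  have hd : (j, j) ∈ Vset n ∧ (j, j) ≠ bvertex n := by
    simp only [mem_Vset, bvertex, ne_eq, Prod.mk.injEq] at *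
    omega
  have h := apply_diag_of_mem_monomerPM hd.1 hd.2 (by simp) hm
  simp only [apply_eq_comm_of_mem_monomerPM hm (x := (j + 1, j + 1)) (y := (j, j)),
    apply_eq_comm_of_mem_monomerPM hm (x := (j + 1, j + 1)) (y := (j, j + 1)),
    apply_self_of_mem_monomerPM hm]
  rcases h.2 with h' | h' | h' | h'
  · exact absurd h' h.1
  all_goals
    rw [h']
    grind

lemma sum_third_left (hv : (j, j + 2) ∈ Vset n) :
    ∑ m ∈ monomerPM n (j, j + 3) with m (j, j + 2) = (j - 1, j + 2), leftSign j m
      = ∑ m ∈ monomerPM n (j - 1, j + 2) with m (j, j + 2) = (j, j + 3), leftSign (j - 1) m := by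
  refine sum_hop _ _ hv second_ne_bvertex (fun hw _ => adj_second_up hv hw)
    (fun hw _ => adj_second_left hv hw) fun m hm hvw => ?_
  rw [leftSign, leftSign, sub_add_cancel, hop_apply_of_ne hm hvw (by simp) (by simp) (by simp)]
  have hd : (j, j) ∈ Vset n ∧ (j, j) ≠ bvertex n ∧ (j, j + 1) ∈ Vset n ∧
      (j, j + 1) ≠ bvertex n := by
    simp only [mem_Vset, bvertex, ne_eq, Prod.mk.injEq] at *
    omega
  have h := apply_diag_of_mem_monomerPM hd.1 hd.2.1 (by simp) hm
  have h1 := adj_first (apply_mem_of_mem_monomerPM hm hd.2.2.1 hd.2.2.2 (by simp)).2.2.2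
  simp only [apply_eq_comm_of_mem_monomerPM hm (x := (j + 1, j + 1)) (y := (j, j)),
    apply_eq_comm_of_mem_monomerPM hm (x := (j + 1, j + 1)) (y := (j, j + 1))]
  rcases h1 with h1 | h1 | h1
  · rw [h1, (apply_eq_comm_of_mem_monomerPM hm).1 h1]
    simp only [Prod.mk.injEq]
    split_ifs <;> omega
  · rw [(apply_eq_comm_of_mem_monomerPM hm).1 h1] at hvw
    simp at hvw
  · have h2 : m (j, j) ≠ (j + 1, j + 1) := fun h2 => by
      have := m.injective (h1.trans h2.symm)
      simp at this
    have h3 : m (j, j) ≠ (j, j + 1) := fun h3 => by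
      rw [(apply_eq_comm_of_mem_monomerPM hm).1 h3] at h1
      simp at h1
    rw [if_pos (Or.inr h1), if_pos]
    tauto

/-- The monomer relation at the vertex `(j,j+2)`. -/
lemma second_relation (hv : (j, j + 2) ∈ Vset n) :
    firstSum n j = thirdSum n j - thirdSum n (j - 1) := by
  have hnbr : ∀ u ≠ (j, j + 2), ∀ m ∈ monomerPM n u, m (j, j + 2) ≠ u ∧
      (m (j, j + 2) = (j, j + 3) ∨ m (j, j + 2) = (j, j + 1) ∨ m (j, j + 2) = (j - 1, j + 2)) :=
    fun u hu m hm =>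
      have h := apply_mem_of_mem_monomerPM hm hv second_ne_bvertex hu.symm
      ⟨h.2.1, adj_second h.2.2.2⟩
  have e1 := sum_eq_of_apply_mem (n := n) (u := (j, j + 1)) (v := (j, j + 2)) (w₁ := (j, j + 3))
    (w₂ := (j - 1, j + 2)) (leftSign j) (by simp) fun m hm => by
      have := hnbr _ (by simp) m hm
      grind
  have e2 := sum_eq_of_apply_mem (n := n) (u := (j, j + 3)) (v := (j, j + 2)) (w₁ := (j, j + 1))
    (w₂ := (j - 1, j + 2)) (leftSign j) (by simp) fun m hm => by
      have := hnbr _ (by simp) m hm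
      grind
  have e3 := sum_eq_of_apply_mem (n := n) (u := (j - 1, j + 2)) (v := (j, j + 2))
    (w₁ := (j, j + 1)) (w₂ := (j, j + 3)) (leftSign (j - 1)) (by simp) fun m hm => by
      have := hnbr _ (by simp) m hm
      grind
  have h3 : j - 1 + 3 = j + 2 := by ring
  rw [firstSum, thirdSum, thirdSum, h3, e1, e2, e3, sum_third_down hv, sum_first_left hv,
    sum_third_left hv, Finset.sum_neg_distrib]
  ring

end SecondRelation

/-! ### Perfect matchings of `G_n` -/

section Full

variable {n : ℕ}

/-- The perfect matchings of `G_n`. -/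
noncomputable def perfectPM (n : ℕ) : Finset (Equiv.Perm (ℤ × ℤ)) :=
  (finite_isPM (Gph n) (finite_Vset n)).toFinset

lemma mem_perfectPM {m : Equiv.Perm (ℤ × ℤ)} : m ∈ perfectPM n ↔ IsPM (Gph n) (Vset n) m := by
  simp [perfectPM]

lemma card_perfectPM : #(perfectPM n) = Zpm n ∅ := by
  rw [Zpm, ← card_isPM, Set.sdiff_empty]
  exact (Nat.subtype_card _ fun m => mem_perfectPM).symm

lemma bvertex_mem : bvertex n ∈ Vset n := by
  simp only [bvertex, mem_Vset]
  omega

lemma card_perfectPM_filter {u : ℤ × ℤ} (hu : u ∈ Vset n) (h : (Gph n).Adj (bvertex n) u) :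
    #{m ∈ perfectPM n | m (bvertex n) = u} = #(monomerPM n u) := by
  refine Finset.card_nbij' (fun m => Equiv.swap u (bvertex n) * m)
    (fun m => Equiv.swap u (bvertex n) * m) ?_ ?_ ?_ ?_
  · intro m hm
    rw [Finset.mem_coe, Finset.mem_filter, mem_perfectPM] at hm
    exact mem_monomerPM.2 ⟨hu, h.ne', hm.1.remove hm.2⟩
  · intro m hm
    have hm' := (mem_monomerPM.1 hm).2.2
    rw [Finset.mem_coe, Finset.mem_filter, mem_perfectPM]
    refine ⟨hm'.insert hu bvertex_mem h, ?_⟩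
    rw [Equiv.Perm.mul_apply, hm'.2.2 _ (by simp), Equiv.swap_apply_right]
  · exact fun m _ => Equiv.swap_mul_self_mul _ _ m
  · exact fun m _ => Equiv.swap_mul_self_mul _ _ m

lemma adj_apply_bvertex {m : Equiv.Perm (ℤ × ℤ)} (hm : m ∈ perfectPM n) :
    (Gph n).Adj (bvertex n) (m (bvertex n)) :=
  (mem_perfectPM.1 hm).2.1 _ bvertex_mem

lemma card_perfectPM_of_even (hn : Even n) : (#(perfectPM n) : ℤ) = diagSum n (2 * n) := by
  have hn2 : n % 2 = 0 := Nat.even_iff.1 hn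
  have hb : bvertex n = (2 * (n : ℤ), 2 * (n : ℤ) + 1) := by simp [bvertex, hn2]
  have hu : (2 * (n : ℤ), 2 * (n : ℤ)) ∈ Vset n := by
    rw [mem_Vset]
    omega
  rw [diagSum, ← card_perfectPM_filter hu, Finset.filter_true_of_mem]
  · intro m hm
    have h := adj_apply_bvertex hm
    rcases hxy : m (bvertex n) with ⟨x, y⟩
    rw [hxy, hb] at h
    simp only [Gph, edgeRel, Int.odd_iff] at h
    simp only [Prod.mk.injEq]
    omega
  · rw [hb]
    refine Or.inr (Or.inr (Or.inl ⟨rfl, rfl, ?_⟩))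
    simp only
    omega

lemma card_perfectPM_of_odd (hn : Odd n) :
    (#(perfectPM n) : ℤ) = firstSum n (2 * n - 1) + diagSum n (2 * n - 1) := by
  have hn2 : n % 2 = 1 := Nat.odd_iff.1 hn
  have hb : bvertex n = (2 * (n : ℤ), 2 * (n : ℤ)) := by simp [bvertex, hn2]
  have hL : (2 * (n : ℤ) - 1, 2 * (n : ℤ)) ∈ Vset n := by
    rw [mem_Vset]
    omega
  have hM : (2 * (n : ℤ) - 1, 2 * (n : ℤ) - 1) ∈ Vset n := by
    rw [mem_Vset]
    omega
  have hsign : firstSum n (2 * n - 1) = #(monomerPM n (2 * (n : ℤ) - 1, 2 * (n : ℤ))) := by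
    rw [firstSum, sub_add_cancel, Finset.sum_congr rfl (g := fun _ => (1 : ℤ)) ?_]
    · simp
    · intro m hm
      have h : m (2 * (n : ℤ), 2 * (n : ℤ)) = (2 * (n : ℤ), 2 * (n : ℤ)) :=
        (mem_monomerPM.1 hm).2.2.2.2 _ (by simp [hb])
      rw [leftSign, sub_add_cancel, h, if_neg]
      simp only [Prod.mk.injEq]
      omega
  have hbM : bvertex n ∈ Vset n := bvertex_mem
  have aL := adj_diag_left (hb ▸ hbM) hL
  have aM := adj_diag_pred (hb ▸ hbM) hM
  rw [← hb] at aL aM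
  rw [hsign, diagSum, ← card_perfectPM_filter hL aL, ← card_perfectPM_filter hM aM,
    ← Finset.card_filter_add_card_filter_not (s := perfectPM n)
      (fun m => m (bvertex n) = (2 * (n : ℤ) - 1, 2 * (n : ℤ)))]
  push_cast
  congr 2
  refine congrArg _ (Finset.filter_congr fun m hm => ?_)
  have h := adj_apply_bvertex hm
  rcases hxy : m (bvertex n) with ⟨x, y⟩
  rw [hxy, hb] at h
  simp only [Gph, edgeRel, Int.odd_iff] at h
  simp only [Prod.mk.injEq]
  omega

end Full

/-! ### Summing the relations -/

section Summation

variable {n : ℕ}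

lemma Zpm_pair_bvertex_eq_zero (hn : Odd n) : Zpm n {(2 * (n : ℤ), 2 * (n : ℤ)), bvertex n} = 0 := by
  have hn2 : n % 2 = 1 := Nat.odd_iff.1 hn
  have hb : bvertex n = (2 * (n : ℤ), 2 * (n : ℤ)) := by simp [bvertex, hn2]
  rw [hb, Set.pair_eq_singleton, Zpm, Nat.card_eq_zero]
  left
  refine ⟨fun ⟨M, hM⟩ => ?_⟩
  have : Fintype ↑(Vset n \ {(2 * (n : ℤ), 2 * (n : ℤ))}) := (finite_Vset n).sdiff.fintype
  have heven := hM.even_card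
  let e : (Σ x : Fin (2 * n), Fin (2 * n + 2 - x)) ≃
      ↑(Vset n \ {(2 * (n : ℤ), 2 * (n : ℤ))}) :=
    { toFun := fun p => ⟨((p.1 : ℤ), (p.1 : ℤ) + (p.2 : ℤ)), by
        simp only [Set.mem_sdiff, mem_Vset, Set.mem_singleton_iff, Prod.mk.injEq]
        omega⟩
      invFun := fun q => ⟨⟨q.1.1.toNat, by
        obtain ⟨⟨x, y⟩, hq⟩ := q
        simp only [Set.mem_sdiff, mem_Vset, Set.mem_singleton_iff, Prod.mk.injEq] at hq ⊢
        omega⟩, ⟨(q.1.2 - q.1.1).toNat, by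
        obtain ⟨⟨x, y⟩, hq⟩ := q
        simp only [Set.mem_sdiff, mem_Vset, Set.mem_singleton_iff, Prod.mk.injEq] at hq ⊢
        omega⟩⟩
      left_inv := by
        rintro ⟨⟨x, hx⟩, ⟨y, hy⟩⟩
        simp
      right_inv := by
        rintro ⟨⟨x, y⟩, hq⟩
        simp only [Set.mem_sdiff, mem_Vset, Set.mem_singleton_iff, Prod.mk.injEq] at hq
        simp only [Subtype.mk.injEq, Prod.mk.injEq]
        omega }
  have hsum : ∀ k ≤ 2 * n, 2 * ∑ x ∈ Finset.range k, (2 * n + 2 - x) + k * k = k * (4 * n + 5) := by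
    intro k hk
    induction k with
    | zero => simp
    | succ k ih =>
      rw [Finset.sum_range_succ]
      have := ih (by omega)
      obtain ⟨c, hc⟩ : ∃ c, 2 * n + 2 - k = c ∧ 2 * n + 2 = k + c := ⟨_, rfl, by omega⟩
      rw [hc.1]
      nlinarith
  rw [← Fintype.card_congr e, Fintype.card_sigma] at heven
  simp only [Fintype.card_fin] at heven
  rw [Fin.sum_univ_eq_sum_range (fun x => 2 * n + 2 - x) (2 * n)] at heven
  have h2 := hsum (2 * n) le_rfl
  have h3 : ∑ x ∈ Finset.range (2 * n), (2 * n + 2 - x) = n * (2 * n + 5) := by nlinarith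
  rw [h3, Nat.even_mul] at heven
  obtain ⟨k, rfl⟩ := hn
  simp only [Nat.even_iff] at heven
  omega

lemma firstSum_eq_diagSum (k : ℕ) (hk : ((k : ℤ), (k : ℤ)) ∈ Vset n)
    (hkb : ((k : ℤ), (k : ℤ)) ≠ bvertex n) :
    firstSum n k = diagSum n 0 - diagSum n k - diagSum n (k + 1) := by
  have hneg : ∀ y : ℤ, monomerPM n (-1, y) = ∅ := fun y =>
    monomerPM_eq_empty fun h => by
      rw [mem_Vset] at h
      omega
  induction k with
  | zero =>
    have h := diag_relation hk hkb
    have h1 : firstSum n (-1) = 0 := by simp [firstSum, hneg]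
    have h2 : diagSum n (-1) = 0 := by simp [diagSum, hneg]
    simp only [Nat.cast_zero, zero_sub, zero_add, h1, h2] at h ⊢
    linarith
  | succ k ih =>
    have h := diag_relation hk hkb
    have hprev : ((k : ℤ), (k : ℤ)) ∈ Vset n ∧ ((k : ℤ), (k : ℤ)) ≠ bvertex n := by
      simp only [mem_Vset, bvertex, ne_eq, Prod.mk.injEq] at *
      omega
    have ih' := ih hprev.1 hprev.2
    push_cast at h ⊢
    rw [add_sub_cancel_right] at h
    linarith

lemma sum_firstSum : ∑ k ∈ Finset.range (2 * n), firstSum n k = 0 := by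
  have h : ∀ K ≤ 2 * n, ∑ k ∈ Finset.range K, firstSum n k = thirdSum n ((K : ℤ) - 1) := by
    intro K hK
    induction K with
    | zero =>
      have h1 : monomerPM n (-1, -1 + 3) = ∅ := monomerPM_eq_empty fun h => by
        rw [mem_Vset] at h
        omega
      simp only [Finset.range_zero, Finset.sum_empty, Nat.cast_zero, zero_sub, thirdSum, h1]
    | succ K ih =>
      rw [Finset.sum_range_succ, ih (by omega), second_relation]
      · push_cast
        rw [add_sub_cancel_right]
        ring
      · rw [mem_Vset]
        omega
  rw [h _ le_rfl, thirdSum, monomerPM_eq_empty, Finset.sum_empty]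
  intro h
  rw [mem_Vset] at h
  omega

lemma two_mul_sum_diagSum : 2 * ∑ k ∈ Finset.range (2 * n + 1), diagSum n k
    = (2 * n + 1) * diagSum n 0 + diagSum n (2 * n) := by
  have h : ∑ k ∈ Finset.range (2 * n), firstSum n k
      = ∑ k ∈ Finset.range (2 * n), (diagSum n 0 - diagSum n k - diagSum n ((k + 1 : ℕ) : ℤ)) := by
    refine Finset.sum_congr rfl fun k hk => ?_
    rw [Finset.mem_range] at hk
    rw [firstSum_eq_diagSum k, Nat.cast_succ]
    · rw [mem_Vset]
      omega
    · simp only [bvertex, ne_eq, Prod.mk.injEq]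
      omega
  rw [sum_firstSum, Finset.sum_sub_distrib, Finset.sum_sub_distrib] at h
  have h1 := Finset.sum_range_succ (fun k : ℕ => diagSum n k) (2 * n)
  have h2 := Finset.sum_range_succ' (fun k : ℕ => diagSum n k) (2 * n)
  simp only [Finset.sum_const, Finset.card_range, nsmul_eq_mul] at h
  push_cast at h h1 h2 ⊢
  linarith

end Summation

/-- Sum rule: for every `n ≥ 0`, if `n` is even then
`Σ_{j=0}^{2n} Z_n^{{(j,j), b_n}} = (n+1)·Z_n`, and if `n` is odd then
`2·Σ_{j=0}^{2n} Z_n^{{(j,j), b_n}} = (2n+1)·Z_n`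
(equivalently, `Σ_{j=0}^{2n} Z_n^{{(j,j), b_n}}/Z_n` is `n+1` for `n` even and
`n+1/2` for `n` odd). -/
theorem sum_rule (n : ℕ) :
    (Even n →
      ∑ j ∈ Finset.range (2*n+1), Zpm n {((j:ℤ), (j:ℤ)), bvertex n} = (n+1) * Zpm n ∅) ∧
    (Odd n →
      2 * ∑ j ∈ Finset.range (2*n+1), Zpm n {((j:ℤ), (j:ℤ)), bvertex n}
        = (2*n+1) * Zpm n ∅) := by
  have hdiag : ∀ j ∈ Finset.range (2 * n + 1), ((j : ℤ), (j : ℤ)) ∈ Vset n := by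
    intro j hj
    rw [Finset.mem_range] at hj
    rw [mem_Vset]
    omega
  have htwo := two_mul_sum_diagSum (n := n)
  refine ⟨fun hn => ?_, fun hn => ?_⟩
  · have hn2 : n % 2 = 0 := Nat.even_iff.1 hn
    have hsum : ((∑ j ∈ Finset.range (2 * n + 1), Zpm n {((j : ℤ), (j : ℤ)), bvertex n} : ℕ) : ℤ)
        = ∑ k ∈ Finset.range (2 * n + 1), diagSum n k := by
      rw [Nat.cast_sum]
      refine Finset.sum_congr rfl fun j hj => ?_
      rw [diagSum, card_monomerPM (hdiag j hj)]
      simp only [bvertex, ne_eq, Prod.mk.injEq]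
      omega
    have hlast := firstSum_eq_diagSum (n := n) (2 * n) (hdiag _ (by simp)) (by
      simp only [bvertex, ne_eq, Prod.mk.injEq]
      omega)
    have h1 : monomerPM n (2 * (n : ℤ), 2 * (n : ℤ) + 1) = ∅ :=
      monomerPM_eq_empty fun _ => by simp [bvertex, hn2]
    have h2 : monomerPM n (2 * (n : ℤ) + 1, 2 * (n : ℤ) + 1) = ∅ := monomerPM_eq_empty fun h => by
      rw [mem_Vset] at h
      omega
    have hZ := card_perfectPM_of_even hn
    rw [card_perfectPM] at hZ
    push_cast at hlast
    rw [firstSum, h1, Finset.sum_empty, diagSum.eq_1 n (2 * n + 1), h2, Finset.card_empty] at hlast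
    have h0 : diagSum n 0 = diagSum n (2 * n) := by
      push_cast at hlast
      linarith
    zify
    rw [← Nat.cast_sum, hsum, hZ]
    rw [h0] at htwo
    linarith
  · have hn2 : n % 2 = 1 := Nat.odd_iff.1 hn
    have hb : bvertex n = (2 * (n : ℤ), 2 * (n : ℤ)) := by simp [bvertex, hn2]
    have hzero : diagSum n (2 * n) = 0 := by
      rw [diagSum, monomerPM_eq_empty fun _ => hb.symm, Finset.card_empty, Nat.cast_zero]
    have hsum : ((∑ j ∈ Finset.range (2 * n + 1), Zpm n {((j : ℤ), (j : ℤ)), bvertex n} : ℕ) : ℤ)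
        = ∑ k ∈ Finset.range (2 * n + 1), diagSum n k := by
      rw [Finset.sum_range_succ, Finset.sum_range_succ]
      push_cast
      rw [Zpm_pair_bvertex_eq_zero hn, hzero, Nat.cast_zero]
      congr 1
      refine Finset.sum_congr rfl fun j hj => ?_
      rw [Finset.mem_range] at hj
      rw [diagSum, card_monomerPM (hdiag j (by rw [Finset.mem_range]; omega))]
      simp only [hb, ne_eq, Prod.mk.injEq]
      omega
    have hlast := firstSum_eq_diagSum (n := n) (2 * n - 1)
      (hdiag _ (by rw [Finset.mem_range]; omega)) (by
        simp only [hb, ne_eq, Prod.mk.injEq]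
        omega)
    have hcast : ((2 * n - 1 : ℕ) : ℤ) = 2 * n - 1 := by omega
    rw [hcast, sub_add_cancel, hzero] at hlast
    have hZ := card_perfectPM_of_odd hn
    rw [card_perfectPM, hlast] at hZ
    zify
    rw [← Nat.cast_sum, hsum, htwo, hZ, hzero]
    ring
end
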